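/- arXiv:1104.3543 — 3 statements merged into one kernel-verified Lean document; each statement's English description precedes it below -/
import Mathlib

section
/- Suppose 𝒲 is a locally minimal Banach space with a Schauder basis (e_n). Then 𝒲 = [e_n] is ω²-minimal. -/
open Filter Topology

namespace Rosendal

variable {𝒲 : Type} [NormedAddCommGroup 𝒲] [NormedSpace ℝ 𝒲]

/-- `(e n)` is a Schauder basis of the Banach space `𝒲`: every vector has a unique
representation as a norm-convergent series `∑ a n • e n`. -/
def IsSchauderBasis (e : ℕ → 𝒲) : Prop :=
  ∀ x : 𝒲, ∃! a : ℕ → ℝ,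
    Tendsto (fun N => ∑ i ∈ Finset.range N, a i • e i) atTop (𝓝 x)

/-- `x` is a linear combination of the vectors `b i`, `i ∈ s`. -/
def SuppIn (b : ℕ → 𝒲) (x : 𝒲) (s : Finset ℕ) : Prop :=
  ∃ a : ℕ → ℝ, x = ∑ i ∈ s, a i • b i

/-- `(y n)` is a block sequence with respect to the basic sequence `(b n)`: a sequence of
nonzero finite linear combinations of the `b i` with successive supports. -/
def IsBlockSeq (b : ℕ → 𝒲) (y : ℕ → 𝒲) : Prop :=
  (∀ n, y n ≠ 0) ∧
  ∃ D : ℕ → Finset ℕ, (∀ n, SuppIn b (y n) (D n)) ∧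
    ∀ n, ∀ i ∈ D n, ∀ j ∈ D (n + 1), i < j

/-- The closed linear span of a set. -/
noncomputable def closedSpan (S : Set 𝒲) : Submodule ℝ 𝒲 :=
  (Submodule.span ℝ S).topologicalClosure

/-- `(x i)_{i<k} ∼_K (y i)_{i<k}`:
`(1/K)‖∑ a i • x i‖ ≤ ‖∑ a i • y i‖ ≤ K‖∑ a i • x i‖` for all scalars. -/
def SeqEquiv (K : ℝ) (k : ℕ) (x y : ℕ → 𝒲) : Prop :=
  ∀ a : ℕ → ℝ,
    (1 / K) * ‖∑ i ∈ Finset.range k, a i • x i‖ ≤ ‖∑ i ∈ Finset.range k, a i • y i‖ ∧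
    ‖∑ i ∈ Finset.range k, a i • y i‖ ≤ K * ‖∑ i ∈ Finset.range k, a i • x i‖

/-- The tree `T((x n), Y, K)` of finite sequences `(y 0, …, y k)` of vectors of `Y` that are
`K`-equivalent to `(x 0, …, x k)`, ordered by end-extension. -/
def embTree (x : ℕ → 𝒲) (Y : Set 𝒲) (K : ℝ) : Set (List 𝒲) :=
  {l | (∀ v ∈ l, v ∈ Y) ∧ SeqEquiv K l.length (fun i => l.getD i 0) x}

open Classical in
/-- The rank of a tree of finite sequences: if the proper end-extension relation is
well-founded (equivalently, for trees, there is no infinite branch), this is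
`sup { ρ(s) + 1 : s ∈ T }` where `ρ` is the usual rank function; otherwise it is `∞ = ⊤`. -/
noncomputable def treeRank (T : Set (List 𝒲)) : WithTop Ordinal :=
  if h : WellFounded (fun t s : T => s.val <+: t.val ∧ s.val ≠ t.val) then
    ((⨆ s : T, Order.succ ((h.apply s).rank) : Ordinal) : WithTop Ordinal)
  else ⊤

open Classical in
/-- The embeddability index `Emb((x n), Y) = sup_{K ≥ 1} rank T((x n), Y, K)`. -/
noncomputable def embIndex (x : ℕ → 𝒲) (Y : Set 𝒲) : WithTop Ordinal :=
  if ∃ K : ℝ, 1 ≤ K ∧ treeRank (embTree x Y K) = ⊤ then ⊤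
  else ((sSup {o : Ordinal | ∃ K : ℝ, 1 ≤ K ∧
      (o : WithTop Ordinal) = treeRank (embTree x Y K)} : Ordinal) : WithTop Ordinal)

/-- `(I m)` is a sequence of successive nonempty finite intervals `I 0 < I 1 < …` of `ℕ`. -/
def IntervalSeq (I : ℕ → Finset ℕ) : Prop :=
  (∀ m, ∃ a b : ℕ, a ≤ b ∧ I m = Finset.Icc a b) ∧
  ∀ m, ∀ i ∈ I m, ∀ j ∈ I (m + 1), i < j

/-- The closed subspace `[b n : n ∉ ⋃_{m ∈ A} I m]`. -/
noncomputable def residualSpace (b : ℕ → 𝒲) (I : ℕ → Finset ℕ) (A : Set ℕ) :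
    Submodule ℝ 𝒲 :=
  closedSpan {v | ∃ n : ℕ, (∀ m ∈ A, n ∉ I m) ∧ v = b n}

/-- The space `[b n]` with its basis `(b n)` is `α`-tight. -/
def IsAlphaTight (b : ℕ → 𝒲) (α : Ordinal) : Prop :=
  ∀ y : ℕ → 𝒲, IsBlockSeq b y →
    ∃ I : ℕ → Finset ℕ, IntervalSeq I ∧
      ∀ A : Set ℕ, A.Infinite →
        embIndex y (residualSpace b I A : Set 𝒲) ≤ (α : WithTop Ordinal)

/-- The space `[b n]` with its basis `(b n)` is `α`-minimal: every block subspace `[z n]`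
`α`-embeds into every infinite-dimensional subspace `Y ⊆ [b n]`. -/
def IsAlphaMinimal (b : ℕ → 𝒲) (α : Ordinal) : Prop :=
  ∀ z : ℕ → 𝒲, IsBlockSeq b z →
    ∀ Y : Submodule ℝ 𝒲, (Y : Set 𝒲) ⊆ (closedSpan (Set.range b) : Set 𝒲) →
      ¬FiniteDimensional ℝ Y →
        (α : WithTop Ordinal) ≤ embIndex z (Y : Set 𝒲)

/-- `X` embeds isomorphically into `Y` (as an isomorphism onto its image). -/
def LinIsoEmbeds (X Y : Submodule ℝ 𝒲) : Prop :=
  ∃ T : X →ₗ[ℝ] 𝒲, (∀ v : X, T v ∈ Y) ∧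
    ∃ c C : ℝ, 0 < c ∧ ∀ v : X, c * ‖v‖ ≤ ‖T v‖ ∧ ‖T v‖ ≤ C * ‖v‖

/-- `X` is a minimal space: it embeds isomorphically into every infinite-dimensional
closed subspace of itself. -/
def IsMinimalSpace (X : Submodule ℝ 𝒲) : Prop :=
  ∀ Y : Submodule ℝ 𝒲, Y ≤ X → IsClosed (Y : Set 𝒲) → ¬FiniteDimensional ℝ Y →
    LinIsoEmbeds X Y

/-- `F` embeds into `Y` with constant `K`. -/
def KEmbeds (K : ℝ) (F Y : Submodule ℝ 𝒲) : Prop :=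
  ∃ T : F →ₗ[ℝ] 𝒲, (∀ v : F, T v ∈ Y) ∧
    ∀ v : F, (1 / K) * ‖v‖ ≤ ‖T v‖ ∧ ‖T v‖ ≤ K * ‖v‖

end Rosendal

namespace Rosendal

/-- `𝒲` is locally minimal: some constant `K ≥ 1` is such that every finite-dimensional
subspace of `𝒲` embeds with constant `K` into every infinite-dimensional subspace of `𝒲`. -/
def LocallyMinimal (𝒲 : Type) [NormedAddCommGroup 𝒲] [NormedSpace ℝ 𝒲] : Prop :=
  ∃ K : ℝ, 1 ≤ K ∧ ∀ F Y : Submodule ℝ 𝒲, FiniteDimensional ℝ F →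
    ¬FiniteDimensional ℝ Y → KEmbeds K F Y

/-!
Call a finite sequence in `Y` that is `C`-equivalent to an initial segment of `(z n)` a `C`-node.
By Mazur's lemma, `Y` has an infinite-dimensional subspace `Z` such that the span of a given
`C`-node `s` is complemented in its sum with `Z` by a projection of norm at most a fixed `M > 1`.
Local minimality places a `K`-copy of the next `m` terms of `(z n)` in `Z`, and since `(z n)` is
basic, appending that copy to `s` gives a `C'`-node, where `C'` depends on `C` but not on `s` or
`m`. Thus `C`-nodes have rank at least `ω` in the tree with constant `C'`. After `n` such
enlargements the root has rank at least `ω * n`, while the constant stays finite, so the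
embeddability index is at least `ω * ω`.
-/

open scoped NNReal

section Mazur

theorem fg_of_fg_inf_of_coFG {R M : Type*} [Ring R] [IsNoetherianRing R] [AddCommGroup M]
    [Module R M] {S T : Submodule R M} (hST : (S ⊓ T).FG) (hT : T.CoFG) : S.FG := by
  have : Module.Finite R (M ⧸ T) := hT
  refine Submodule.fg_of_fg_map_of_fg_inf_ker T.mkQ (IsNoetherian.noetherian _) ?_
  rwa [Submodule.ker_mkQ]

variable {𝕜 E : Type*} [RCLike 𝕜] [NormedAddCommGroup E] [NormedSpace 𝕜 E]

theorem exists_finite_norming_set (F : Submodule 𝕜 E) [FiniteDimensional 𝕜 F] {C : ℝ}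
    (hC : 1 < C) :
    ∃ s : Set (StrongDual 𝕜 E), s.Finite ∧ (∀ φ ∈ s, ‖φ‖ ≤ 1) ∧
      ∀ f ∈ F, ∃ φ ∈ s, ‖f‖ ≤ C * ‖φ f‖ := by
  have : ProperSpace F := FiniteDimensional.proper_rclike 𝕜 F
  obtain ⟨t, ht_sphere, ht_fin, ht_cover⟩ :=
    (isCompact_sphere (0 : F) 1).finite_cover_balls (sub_pos.2 (inv_lt_one_of_one_lt₀ hC))
  choose φ hφ_norm hφ_self using fun x : E => exists_dual_vector'' 𝕜 x
  refine ⟨insert 0 ((fun x : F => φ x) '' t), (ht_fin.image _).insert 0, ?_, fun f hf => ?_⟩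
  · rintro _ (rfl | ⟨x, -, rfl⟩)
    exacts [by simp, hφ_norm x]
  rcases eq_or_ne f 0 with rfl | hf0
  · exact ⟨0, Set.mem_insert _ _, by simp⟩
  have hf_pos : 0 < ‖f‖ := norm_pos_iff.2 hf0
  let g : F := ((‖f‖⁻¹ : ℝ) : 𝕜) • ⟨f, hf⟩
  have hg : g ∈ Metric.sphere (0 : F) 1 := by simp [g, norm_smul, hf_pos.ne']
  obtain ⟨x, hxt, hgx⟩ := Set.mem_iUnion₂.1 (ht_cover hg)
  have hx : ‖(x : E)‖ = 1 := by simpa using ht_sphere hxt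
  refine ⟨φ x, Set.mem_insert_of_mem _ ⟨x, hxt, rfl⟩, ?_⟩
  have hφg : C⁻¹ ≤ ‖φ x g‖ := by
    have h_near : ‖φ x (x - g)‖ ≤ ‖(g : E) - x‖ := by
      simpa [norm_sub_rev] using (φ x).le_of_opNorm_le (hφ_norm x) (x - g)
    have h_split : ‖φ x x‖ ≤ ‖φ x g‖ + ‖φ x (x - g)‖ := by
      simpa using norm_add_le (φ x g) (φ x (x - g))
    have h_ball : ‖(g : E) - x‖ < 1 - C⁻¹ := by simpa [dist_eq_norm] using hgx
    have h_self : ‖φ x x‖ = 1 := by simp [hφ_self, hx]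
    linarith
  have hφf : ‖φ x g‖ = ‖f‖⁻¹ * ‖φ x f‖ := by simp [g]
  rwa [hφf, ← div_eq_inv_mul, le_div_iff₀ hf_pos, inv_mul_le_iff₀ (by linarith)] at hφg

theorem exists_coFG_norm_le_mul_norm_add (F : Submodule 𝕜 E) [FiniteDimensional 𝕜 F] {C : ℝ}
    (hC : 1 < C) :
    ∃ Z : Submodule 𝕜 E, Z.CoFG ∧ ∀ f ∈ F, ∀ y ∈ Z, ‖f‖ ≤ C * ‖f + y‖ := by
  obtain ⟨s, hs_fin, hs_norm, hs⟩ := exists_finite_norming_set F hC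
  refine ⟨sInf ((fun φ : StrongDual 𝕜 E => φ.toLinearMap.ker) '' s),
    Submodule.CoFG.sInf_of_finite (hs_fin.image _) ?_, fun f hf y hy => ?_⟩
  · rintro _ ⟨φ, -, rfl⟩
    exact Submodule.CoFG.ker _
  · obtain ⟨φ, hφ, hfφ⟩ := hs f hf
    have hφy : φ y = 0 := (Submodule.mem_sInf.1 hy) _ ⟨φ, hφ, rfl⟩
    calc ‖f‖ ≤ C * ‖φ (f + y)‖ := by rwa [map_add, hφy, add_zero]
      _ ≤ C * ‖f + y‖ := by
        gcongr
        simpa using φ.le_of_opNorm_le (hs_norm φ hφ) (f + y)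

theorem exists_le_infinite_norm_le_mul_norm_add (F : Submodule 𝕜 E) [FiniteDimensional 𝕜 F]
    {Y : Submodule 𝕜 E} (hY : ¬FiniteDimensional 𝕜 Y) {C : ℝ} (hC : 1 < C) :
    ∃ Z ≤ Y, ¬FiniteDimensional 𝕜 Z ∧ ∀ f ∈ F, ∀ y ∈ Z, ‖f‖ ≤ C * ‖f + y‖ := by
  obtain ⟨Z, hZ, hFZ⟩ := exists_coFG_norm_le_mul_norm_add F hC
  refine ⟨Y ⊓ Z, inf_le_left, fun h => hY ?_, fun f hf y hy => hFZ f hf y hy.2⟩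
  exact Module.Finite.iff_fg.2 (fg_of_fg_inf_of_coFG (Module.Finite.iff_fg.1 h) hZ)

end Mazur

section BasicSequences

theorem sum_range_ite_lt_smul {R M : Type*} [Semiring R] [AddCommMonoid M] [Module R M]
    (a : ℕ → R) (x : ℕ → M) {k n : ℕ} (hkn : k ≤ n) :
    ∑ i ∈ Finset.range n, (if i < k then a i else 0) • x i =
      ∑ i ∈ Finset.range k, a i • x i := by
  simp only [ite_smul, zero_smul, ← Finset.sum_filter]
  congr 1
  ext i
  simpa using fun hi : i < k => hi.trans_le hkn

variable {E : Type*} [NormedAddCommGroup E] [NormedSpace ℝ E]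

/-- `x` satisfies Grünblum's criterion with constant `C`: for nonzero terms, this says that `x` is
a basic sequence with basis constant at most `C`. -/
def HasBasisConst (C : ℝ≥0) (x : ℕ → E) : Prop :=
  ∀ (a : ℕ → ℝ) ⦃k n : ℕ⦄, k ≤ n →
    ‖∑ i ∈ Finset.range k, a i • x i‖ ≤ C * ‖∑ i ∈ Finset.range n, a i • x i‖

theorem HasBasisConst.mono {C D : ℝ≥0} {x : ℕ → E} (hx : HasBasisConst C x) (hCD : C ≤ D) :
    HasBasisConst D x :=
  fun a _ _ hkn => (hx a hkn).trans (by gcongr)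

end BasicSequences

section BlockSequences

variable {𝒲 : Type} [NormedAddCommGroup 𝒲] [NormedSpace ℝ 𝒲] {b z : ℕ → 𝒲}

theorem IsBlockSeq.exists_supports (hz : IsBlockSeq b z) :
    ∃ (D : ℕ → Finset ℕ) (d : ℕ → ℕ → ℝ) (N : ℕ → ℕ), Monotone N ∧
      (∀ i, z i = ∑ j ∈ D i, d i j • b j) ∧ ∀ i k, ∀ j ∈ D i, j < N k ↔ i < k := by
  obtain ⟨hz_ne, D, hD, hD_succ⟩ := hz
  choose d hd using hD
  have hD_ne (i : ℕ) : (D i).Nonempty := by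
    by_contra h
    exact hz_ne i (by simp [hd i, Finset.not_nonempty_iff_eq_empty.1 h])
  have hD_lt {i k : ℕ} (hik : i < k) : ∀ p ∈ D i, ∀ q ∈ D k, p < q := by
    induction k, hik using Nat.le_induction with
    | base => exact hD_succ i
    | succ k _ ih =>
      intro p hp q hq
      obtain ⟨r, hr⟩ := hD_ne k
      exact (ih p hp r hr).trans (hD_succ k r hr q hq)
  have hmin (k : ℕ) := (D k).min'_mem (hD_ne k)
  refine ⟨D, d, fun k => (D k).min' (hD_ne k), ?_, hd, fun i k j hj => ⟨?_, ?_⟩⟩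
  · exact monotone_nat_of_le_succ fun k => (hD_succ k _ (hmin k) _ (hmin (k + 1))).le
  · contrapose!
    intro hki
    rcases hki.eq_or_lt with rfl | hki
    · exact (D k).min'_le j hj
    · exact (hD_lt hki _ (hmin k) j hj).le
  · exact fun hik => hD_lt hik j hj _ (hmin k)

theorem IsBlockSeq.hasBasisConst (hz : IsBlockSeq b z) {C : ℝ≥0} (hb : HasBasisConst C b) :
    HasBasisConst C z := by
  intro a k n hkn
  obtain ⟨D, d, N, hN, hzD, hDN⟩ := hz.exists_supports
  let c (j : ℕ) : ℝ := ∑ i ∈ Finset.range n, if j ∈ D i then a i * d i j else 0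
  have hblock (l i : ℕ) : ∑ j ∈ Finset.range (N l), (if j ∈ D i then a i * d i j else 0) • b j =
      (if i < l then a i else 0) • z i := by
    simp only [ite_smul, zero_smul, mul_smul, ← Finset.sum_filter]
    split_ifs with hil
    · rw [hzD, Finset.smul_sum]
      congr 1
      ext j
      simpa using fun hj => (hDN i l j hj).2 hil
    · refine Finset.sum_eq_zero fun j hj => ?_
      simp only [Finset.mem_filter, Finset.mem_range] at hj
      exact absurd ((hDN i l j hj.2).1 hj.1) hil
  have hsum {l : ℕ} (hl : l ≤ n) :
      ∑ j ∈ Finset.range (N l), c j • b j = ∑ i ∈ Finset.range l, a i • z i := by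
    simp only [c, Finset.sum_smul]
    rw [Finset.sum_comm]
    simp only [hblock, sum_range_ite_lt_smul a z hl]
  rw [← hsum hkn, ← hsum le_rfl]
  exact hb c (hN hkn)

end BlockSequences

section SchauderBases

theorem isClosed_setOf_eq_sum_range_smul {𝕜 E : Type*} [NontriviallyNormedField 𝕜]
    [CompleteSpace 𝕜] [NormedAddCommGroup E] [NormedSpace 𝕜 E] (e : ℕ → E) :
    IsClosed {s : ℕ → E | ∃ a : ℕ → 𝕜, ∀ n, s n = ∑ i ∈ Finset.range n, a i • e i} := by
  have h_eq : {s : ℕ → E | ∃ a : ℕ → 𝕜, ∀ n, s n = ∑ i ∈ Finset.range n, a i • e i} =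
      {s | s 0 = 0} ∩ ⋂ n, {s | s (n + 1) - s n ∈ Submodule.span 𝕜 {e n}} := by
    ext s
    simp only [Set.mem_ofPred_eq, Set.mem_inter_iff, Set.mem_iInter, Submodule.mem_span_singleton]
    refine ⟨fun ⟨a, ha⟩ => ⟨by simp [ha], fun n => ⟨a n, ?_⟩⟩, fun ⟨h_zero, h_succ⟩ => ?_⟩
    · rw [ha, ha, Finset.sum_range_succ, add_sub_cancel_left]
    · choose a ha using h_succ
      refine ⟨a, fun n => ?_⟩
      simp only [ha, Finset.sum_range_sub, h_zero, sub_zero]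
  rw [h_eq]
  refine (isClosed_eq (continuous_apply 0) continuous_const).inter (isClosed_iInter fun n => ?_)
  exact (Submodule.closed_of_finiteDimensional _).preimage
    ((continuous_apply (n + 1)).sub (continuous_apply n))

namespace IsSchauderBasis

variable {𝒲 : Type} [NormedAddCommGroup 𝒲] [NormedSpace ℝ 𝒲] {e : ℕ → 𝒲}

/-- The coordinates of a vector with respect to a Schauder basis. -/
noncomputable def coord (he : IsSchauderBasis e) : 𝒲 →ₗ[ℝ] ℕ → ℝ where
  toFun x := (he x).choose
  map_add' x y := ((he (x + y)).choose_spec.2 _ (by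
    simpa [add_smul, Finset.sum_add_distrib] using
      (he x).choose_spec.1.add (he y).choose_spec.1)).symm
  map_smul' c x := ((he (c • x)).choose_spec.2 _ (by
    simpa [mul_smul, Finset.smul_sum] using (he x).choose_spec.1.const_smul c)).symm

variable (he : IsSchauderBasis e)

theorem tendsto_sum_coord_smul (x : 𝒲) :
    Tendsto (fun n => ∑ i ∈ Finset.range n, he.coord x i • e i) atTop (𝓝 x) :=
  (he x).choose_spec.1

theorem eq_coord_of_tendsto {x : 𝒲} {a : ℕ → ℝ}
    (ha : Tendsto (fun n => ∑ i ∈ Finset.range n, a i • e i) atTop (𝓝 x)) : a = he.coord x :=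
  (he x).choose_spec.2 a ha

theorem coord_sum_range_smul (a : ℕ → ℝ) (n : ℕ) :
    he.coord (∑ i ∈ Finset.range n, a i • e i) = fun i => if i < n then a i else 0 := by
  refine (he.eq_coord_of_tendsto (tendsto_const_nhds.congr' ?_)).symm
  filter_upwards [eventually_ge_atTop n] with m hm
  exact (sum_range_ite_lt_smul a e hm).symm

theorem exists_norm_sum_coord_smul_le (x : 𝒲) :
    ∃ C, ∀ n, ‖∑ i ∈ Finset.range n, he.coord x i • e i‖ ≤ C := by
  obtain ⟨C, hC⟩ :=
    (Metric.isBounded_range_of_tendsto _ (he.tendsto_sum_coord_smul x)).exists_norm_le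
  exact ⟨C, fun n => hC _ ⟨n, rfl⟩⟩

/-- The operator taking a vector to the bounded sequence of partial sums of its expansion. -/
noncomputable def partialSums : 𝒲 →ₗ[ℝ] BoundedContinuousFunction ℕ 𝒲 where
  toFun x := .ofNormedAddCommGroupDiscrete (fun n => ∑ i ∈ Finset.range n, he.coord x i • e i)
    (he.exists_norm_sum_coord_smul_le x).choose (he.exists_norm_sum_coord_smul_le x).choose_spec
  map_add' x y := by ext n; simp [add_smul, Finset.sum_add_distrib]
  map_smul' c x := by ext n; simp [mul_smul, Finset.smul_sum]

theorem partialSums_apply (x : 𝒲) (n : ℕ) :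
    he.partialSums x n = ∑ i ∈ Finset.range n, he.coord x i • e i :=
  rfl

theorem continuous_partialSums [CompleteSpace 𝒲] : Continuous he.partialSums := by
  -- The limit `g` of the partial sums is a series by closedness, and it converges to `x` by
  -- uniformity in `n`, so uniqueness of expansions identifies it with the expansion of `x`.
  refine he.partialSums.continuous_of_seq_closed_graph fun u x g hux hg => ?_
  obtain ⟨a, ha⟩ : ∃ a : ℕ → ℝ, ∀ n, g n = ∑ i ∈ Finset.range n, a i • e i :=
    (isClosed_setOf_eq_sum_range_smul e).mem_of_tendsto
      (tendsto_pi_nhds.2 fun n =>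
        ((BoundedContinuousFunction.evalCLM ℝ n).continuous.tendsto g).comp hg)
      (Eventually.of_forall fun k => ⟨he.coord (u k), he.partialSums_apply (u k)⟩)
  have hgx : Tendsto g atTop (𝓝 x) :=
    (BoundedContinuousFunction.tendsto_iff_tendstoUniformly.1 hg).tendsto_of_eventually_tendsto
      (Eventually.of_forall fun k => he.tendsto_sum_coord_smul (u k)) hux
  ext n
  rw [ha, he.partialSums_apply, he.eq_coord_of_tendsto (hgx.congr ha)]

theorem exists_hasBasisConst [CompleteSpace 𝒲] (he : IsSchauderBasis e) :
    ∃ C, HasBasisConst C e := by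
  let S : 𝒲 →L[ℝ] BoundedContinuousFunction ℕ 𝒲 := ⟨he.partialSums, he.continuous_partialSums⟩
  refine ⟨‖S‖₊, fun a k n hkn => ?_⟩
  set x := ∑ i ∈ Finset.range n, a i • e i with hx
  have hSx : S x k = ∑ i ∈ Finset.range k, a i • e i := by
    change he.partialSums x k = _
    rw [he.partialSums_apply, hx, he.coord_sum_range_smul]
    refine Finset.sum_congr rfl fun i hi => ?_
    dsimp only
    rw [if_pos ((Finset.mem_range.1 hi).trans_le hkn)]
  rw [← hSx]
  exact (BoundedContinuousFunction.norm_coe_le_norm _ k).trans (S.le_opNorm x)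

end IsSchauderBasis

end SchauderBases

section TreeRank

variable {α : Type*}

/-- The relation whose ranks `treeRank` measures: `t` is a proper end-extension of `s` in `T`. -/
def ProperExtension (T : Set (List α)) (t s : T) : Prop :=
  s.val <+: t.val ∧ s.val ≠ t.val

theorem rank_append_add_length_le {T : Set (List α)} (hT : T ∈ Descriptive.tree α)
    (hwf : WellFounded (ProperExtension T)) {s u : List α} (hs : s ∈ T) (hsu : s ++ u ∈ T) :
    (hwf.apply ⟨s ++ u, hsu⟩).rank + u.length ≤ (hwf.apply ⟨s, hs⟩).rank := by
  induction u using List.reverseRecOn with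
  | nil => simp
  | append_singleton u x ih =>
    have hu : s ++ u ∈ T := hT (by rwa [List.append_assoc])
    have hlt := (hwf.apply ⟨s ++ u, hu⟩).rank_lt_of_rel
      (a := ⟨s ++ (u ++ [x]), hsu⟩) ⟨by simp, by simp⟩
    calc (hwf.apply ⟨s ++ (u ++ [x]), hsu⟩).rank + ((u ++ [x]).length : ℕ)
        = (hwf.apply ⟨s ++ (u ++ [x]), hsu⟩).rank + 1 + u.length := by
          rw [List.length_append, List.length_singleton, add_comm u.length, Nat.cast_add,
            Nat.cast_one, add_assoc]
      _ ≤ (hwf.apply ⟨s ++ u, hu⟩).rank + u.length := by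
          gcongr
          exact Order.add_one_le_of_lt hlt
      _ ≤ (hwf.apply ⟨s, hs⟩).rank := ih hu

theorem omega0_mul_le_rank {T : ℕ → Set (List α)} {N : ℕ} (hT : T N ∈ Descriptive.tree α)
    (hmono : Monotone T) (hext : ∀ n, ∀ s ∈ T n, ∀ m, ∃ u, u.length = m ∧ s ++ u ∈ T (n + 1))
    (hwf : WellFounded (ProperExtension (T N))) {k n : ℕ} (hkn : k + n = N) {s : List α}
    (hs : s ∈ T k) (hsN : s ∈ T N) :
    Ordinal.omega0 * n ≤ (hwf.apply ⟨s, hsN⟩).rank := by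
  induction n generalizing k s with
  | zero => simp
  | succ n ih =>
    rw [Nat.cast_succ, mul_add_one, ← Ordinal.iSup_add_natCast]
    refine Ordinal.iSup_le fun m => ?_
    obtain ⟨u, rfl, hu⟩ := hext k s hs m
    have huN : s ++ u ∈ T N := hmono (by lia) hu
    calc Ordinal.omega0 * n + u.length
        ≤ (hwf.apply ⟨s ++ u, huN⟩).rank + u.length := by
          gcongr
          exact ih (by lia) hu huN
      _ ≤ (hwf.apply ⟨s, hsN⟩).rank := rank_append_add_length_le hT hwf hsN huN

theorem le_treeRank {β : Type} {T : Set (List β)} {o : Ordinal} (s : T)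
    (ho : ∀ hwf : WellFounded (ProperExtension T), o ≤ (hwf.apply s).rank) :
    (o : WithTop Ordinal) ≤ treeRank T := by
  unfold treeRank
  split_ifs with hwf
  · refine WithTop.coe_le_coe.2 ((ho hwf).trans ((Order.le_succ _).trans ?_))
    exact Ordinal.le_iSup (fun t : T => Order.succ (hwf.apply t).rank) s
  · exact le_top

theorem omega0_mul_le_treeRank {β : Type} {T : ℕ → Set (List β)}
    (hT : ∀ n, T n ∈ Descriptive.tree β)
    (hmono : Monotone T) (hext : ∀ n, ∀ s ∈ T n, ∀ m, ∃ u, u.length = m ∧ s ++ u ∈ T (n + 1))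
    (hroot : [] ∈ T 0) (n : ℕ) :
    ((Ordinal.omega0 * n : Ordinal) : WithTop Ordinal) ≤ treeRank (T n) :=
  le_treeRank ⟨[], hmono n.zero_le hroot⟩ fun hwf =>
    omega0_mul_le_rank (hT n) hmono hext hwf (zero_add n) hroot _

theorem treeRank_le_embIndex {𝒲 : Type} [NormedAddCommGroup 𝒲] [NormedSpace ℝ 𝒲] (x : ℕ → 𝒲)
    (Y : Set 𝒲) {K : ℝ} (hK : 1 ≤ K) :
    treeRank (embTree x Y K) ≤ embIndex x Y := by
  unfold embIndex
  split_ifs with htop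
  · exact le_top
  obtain ⟨o, ho⟩ := WithTop.ne_top_iff_exists.1 fun h => htop ⟨K, hK, h⟩
  have hbdd : BddAbove {o : Ordinal | ∃ K : ℝ, 1 ≤ K ∧
      (o : WithTop Ordinal) = treeRank (embTree x Y K)} := by
    refine (Ordinal.bddAbove_of_small
      (s := Set.range fun K : ℝ => (treeRank (embTree x Y K)).untopD 0)).mono ?_
    rintro o ⟨K, -, ho⟩
    exact ⟨K, by simp [← ho]⟩
  rw [← ho, WithTop.coe_le_coe]
  exact le_csSup hbdd ⟨K, hK, ho⟩

theorem coe_mul_omega0_le {o : Ordinal} {x : WithTop Ordinal}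
    (h : ∀ n : ℕ, ((o * n : Ordinal) : WithTop Ordinal) ≤ x) :
    ((o * Ordinal.omega0 : Ordinal) : WithTop Ordinal) ≤ x := by
  cases x with
  | top => exact le_top
  | coe x =>
    rw [WithTop.coe_le_coe, ← Ordinal.iSup_mul_natCast]
    exact Ordinal.iSup_le fun n => WithTop.coe_le_coe.1 (h n)

end TreeRank

section SeqEquiv

theorem norm_add_le_of_norm_le_mul {E F : Type*} [SeminormedAddCommGroup E]
    [SeminormedAddCommGroup F] {f v : E} {w y : F} {C K M : ℝ} (hC : 0 ≤ C) (hK : 0 ≤ K)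
    (hfw : ‖f‖ ≤ C * ‖w‖) (hvy : ‖v‖ ≤ K * ‖y‖) (hw : ‖w‖ ≤ M * ‖w + y‖) :
    ‖f + v‖ ≤ (C * M + K * (1 + M)) * ‖w + y‖ := by
  have hy : ‖y‖ ≤ (1 + M) * ‖w + y‖ := by
    have := norm_sub_le (w + y) w
    rw [add_sub_cancel_left] at this
    linarith
  calc ‖f + v‖ ≤ ‖f‖ + ‖v‖ := norm_add_le f v
    _ ≤ C * ‖w‖ + K * ‖y‖ := add_le_add hfw hvy
    _ ≤ C * (M * ‖w + y‖) + K * ((1 + M) * ‖w + y‖) := by gcongr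
    _ = (C * M + K * (1 + M)) * ‖w + y‖ := by ring

variable {𝒲 : Type} [NormedAddCommGroup 𝒲] [NormedSpace ℝ 𝒲] {x y z : ℕ → 𝒲} {k m n : ℕ} {C K : ℝ}

theorem seqEquiv_iff (hK : 0 < K) :
    SeqEquiv K n x y ↔ ∀ a : ℕ → ℝ,
      ‖∑ i ∈ Finset.range n, a i • x i‖ ≤ K * ‖∑ i ∈ Finset.range n, a i • y i‖ ∧
      ‖∑ i ∈ Finset.range n, a i • y i‖ ≤ K * ‖∑ i ∈ Finset.range n, a i • x i‖ := by
  simp only [SeqEquiv, one_div, inv_mul_le_iff₀ hK]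

theorem SeqEquiv.mono (h : SeqEquiv C n x y) (hC : 0 < C) (hCK : C ≤ K) : SeqEquiv K n x y := by
  intro a
  obtain ⟨hlower, hupper⟩ := h a
  exact ⟨le_trans (by gcongr) hlower, hupper.trans (by gcongr)⟩

theorem SeqEquiv.of_le (h : SeqEquiv K n x y) (hkn : k ≤ n) : SeqEquiv K k x y := by
  intro a
  simpa only [sum_range_ite_lt_smul a _ hkn] using h fun i => if i < k then a i else 0

theorem SeqEquiv.congr_left {x' : ℕ → 𝒲} (h : SeqEquiv K n x y) (hx : ∀ i < n, x i = x' i) :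
    SeqEquiv K n x' y := by
  intro a
  have hsum : ∑ i ∈ Finset.range n, a i • x' i = ∑ i ∈ Finset.range n, a i • x i :=
    Finset.sum_congr rfl fun i hi => by rw [hx i (Finset.mem_range.1 hi)]
  rw [hsum]
  exact h a

theorem SeqEquiv.append {M : ℝ≥0} (hC : 0 < C) (hK : 0 < K) (hhead : SeqEquiv C k x y)
    (htail : SeqEquiv K m (fun i => x (k + i)) fun i => y (k + i))
    (hx : ∀ a : ℕ → ℝ, ‖∑ i ∈ Finset.range k, a i • x i‖ ≤
      M * ‖∑ i ∈ Finset.range (k + m), a i • x i‖)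
    (hy : ∀ a : ℕ → ℝ, ‖∑ i ∈ Finset.range k, a i • y i‖ ≤
      M * ‖∑ i ∈ Finset.range (k + m), a i • y i‖) :
    SeqEquiv (C * M + K * (1 + M)) (k + m) x y := by
  rw [seqEquiv_iff (by positivity)]
  intro a
  obtain ⟨hhead₁, hhead₂⟩ := (seqEquiv_iff hC).1 hhead a
  obtain ⟨htail₁, htail₂⟩ := (seqEquiv_iff hK).1 htail fun i => a (k + i)
  have hx := hx a
  have hy := hy a
  simp only [Finset.sum_range_add] at hx hy ⊢
  exact ⟨norm_add_le_of_norm_le_mul hC.le hK.le hhead₁ htail₁ hy,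
    norm_add_le_of_norm_le_mul hC.le hK.le hhead₂ htail₂ hx⟩

end SeqEquiv

section EmbeddingTree

variable {𝒲 : Type} [NormedAddCommGroup 𝒲] [NormedSpace ℝ 𝒲] {z : ℕ → 𝒲} {C K : ℝ}

theorem nil_mem_embTree (z : ℕ → 𝒲) (Y : Set 𝒲) (K : ℝ) : [] ∈ embTree z Y K :=
  ⟨by simp, fun a => by simp⟩

theorem embTree_mono (z : ℕ → 𝒲) {Y Y' : Set 𝒲} (hY : Y ⊆ Y') (hC : 0 < C) (hCK : C ≤ K) :
    embTree z Y C ⊆ embTree z Y' K :=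
  fun _ hl => ⟨fun v hv => hY (hl.1 v hv), hl.2.mono hC hCK⟩

theorem embTree_mem_tree (z : ℕ → 𝒲) (Y : Set 𝒲) (K : ℝ) :
    embTree z Y K ∈ Descriptive.tree 𝒲 := by
  intro l v hl
  refine ⟨fun w hw => hl.1 w (List.mem_append_left _ hw), ?_⟩
  exact (hl.2.of_le (by simp)).congr_left fun i hi => List.getD_append _ _ _ _ hi

theorem sum_smul_getD_mem_span (a : ℕ → ℝ) (l : List 𝒲) :
    ∑ i ∈ Finset.range l.length, a i • l.getD i 0 ∈ Submodule.span ℝ {v | v ∈ l} := by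
  refine Submodule.sum_mem _ fun i hi => Submodule.smul_mem _ _ (Submodule.subset_span ?_)
  rw [List.getD_eq_getElem _ _ (Finset.mem_range.1 hi)]
  exact List.getElem_mem _

theorem append_mem_embTree {Y : Set 𝒲} {M : ℝ≥0} {s u : List 𝒲} (hC : 0 < C) (hK : 0 < K)
    (hz : HasBasisConst M z) (hs : s ∈ embTree z Y C)
    (hu : u ∈ embTree (fun i => z (s.length + i)) Y K)
    (hsu : ∀ f ∈ Submodule.span ℝ {v | v ∈ s}, ∀ g ∈ Submodule.span ℝ {v | v ∈ u},
      ‖f‖ ≤ M * ‖f + g‖) :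
    s ++ u ∈ embTree z Y (C * M + K * (1 + M)) := by
  refine ⟨fun v hv => (List.mem_append.1 hv).elim (hs.1 v) (hu.1 v), ?_⟩
  have hleft : ∀ i < s.length, s.getD i 0 = (s ++ u).getD i 0 :=
    fun i hi => (List.getD_append s u 0 i hi).symm
  have hright (i : ℕ) : (s ++ u).getD (s.length + i) 0 = u.getD i 0 := by
    rw [List.getD_append_right _ _ _ _ (Nat.le_add_right _ _), Nat.add_sub_cancel_left]
  rw [List.length_append]
  refine (hs.2.congr_left hleft).append hC hK (hu.2.congr_left fun i _ => (hright i).symm)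
    (fun a => ?_) fun a => hz a (Nat.le_add_right _ _)
  have hsum : ∑ i ∈ Finset.range s.length, a i • (s ++ u).getD i 0 =
      ∑ i ∈ Finset.range s.length, a i • s.getD i 0 :=
    Finset.sum_congr rfl fun i hi => by rw [hleft i (Finset.mem_range.1 hi)]
  simp only [Finset.sum_range_add, hsum, hright]
  exact hsu _ (sum_smul_getD_mem_span a s) _ (sum_smul_getD_mem_span _ u)

theorem KEmbeds.exists_mem_embTree_length_eq (hK : 0 < K) {F Y : Submodule ℝ 𝒲}
    (h : KEmbeds K F Y) {m : ℕ} (hz : ∀ i < m, z i ∈ F) :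
    ∃ u ∈ embTree z (Y : Set 𝒲) K, u.length = m := by
  obtain ⟨T, hTY, hT⟩ := h
  obtain ⟨S, hS⟩ := T.exists_extend
  have hST (v : F) : S v = T v := LinearMap.congr_fun hS v
  have hlen : ((List.range m).map fun i => S (z i)).length = m := by simp
  have hequiv : SeqEquiv K m (fun i => S (z i)) z := by
    refine (seqEquiv_iff hK).2 fun a => ?_
    let v : F := ⟨∑ i ∈ Finset.range m, a i • z i,
      F.sum_mem fun i hi => F.smul_mem _ (hz i (Finset.mem_range.1 hi))⟩
    have hv : ∑ i ∈ Finset.range m, a i • S (z i) = T v := by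
      simp only [← hST, v, map_sum, map_smul]
    obtain ⟨hlower, hupper⟩ := hT v
    rw [one_div, inv_mul_le_iff₀ hK] at hlower
    exact hv ▸ ⟨hupper, hlower⟩
  refine ⟨(List.range m).map fun i => S (z i), ⟨fun v hv => ?_, ?_⟩, hlen⟩
  · obtain ⟨i, hi, rfl⟩ := List.mem_map.1 hv
    exact hST ⟨z i, hz i (List.mem_range.1 hi)⟩ ▸ hTY _
  · rw [hlen]
    exact hequiv.congr_left fun i hi => by simp [hi]

end EmbeddingTree

section LocalMinimality

variable {𝒲 : Type} [NormedAddCommGroup 𝒲] [NormedSpace ℝ 𝒲] {z : ℕ → 𝒲} {M : ℝ≥0}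
  {Y : Submodule ℝ 𝒲}

theorem exists_append_mem_embTree {C K : ℝ} (hC : 0 < C) (hK : 0 < K) (hM : 1 < M)
    (hz : HasBasisConst M z)
    (hloc : ∀ F Y : Submodule ℝ 𝒲, FiniteDimensional ℝ F → ¬FiniteDimensional ℝ Y → KEmbeds K F Y)
    (hY : ¬FiniteDimensional ℝ Y) {s : List 𝒲} (hs : s ∈ embTree z (Y : Set 𝒲) C) (m : ℕ) :
    ∃ u, u.length = m ∧ s ++ u ∈ embTree z (Y : Set 𝒲) (C * M + K * (1 + M)) := by
  have := FiniteDimensional.span_of_finite ℝ s.finite_toSet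
  obtain ⟨Z, hZY, hZ, hsZ⟩ :=
    exists_le_infinite_norm_le_mul_norm_add (Submodule.span ℝ {v | v ∈ s}) hY (C := M) hM
  have hfin : ((fun i => z (s.length + i)) '' Set.Iio m).Finite := (Set.finite_Iio m).image _
  obtain ⟨u, hu, hum⟩ :=
    (hloc _ Z (FiniteDimensional.span_of_finite ℝ hfin) hZ).exists_mem_embTree_length_eq hK
      fun i hi => Submodule.subset_span ⟨i, hi, rfl⟩
  have huZ : Submodule.span ℝ {v | v ∈ u} ≤ Z := Submodule.span_le.2 hu.1
  exact ⟨u, hum, append_mem_embTree hC hK hz hs (embTree_mono _ hZY hK le_rfl hu)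
    fun f hf g hg => hsZ f hf g (huZ hg)⟩

theorem LocallyMinimal.omega0_mul_omega0_le_embIndex (hloc : LocallyMinimal 𝒲)
    (hz : HasBasisConst M z) (hY : ¬FiniteDimensional ℝ Y) :
    ((Ordinal.omega0 * Ordinal.omega0 : Ordinal) : WithTop Ordinal) ≤
      embIndex z (Y : Set 𝒲) := by
  obtain ⟨K, hK, hloc⟩ := hloc
  wlog hM : 1 < M generalizing M
  · exact this (hz.mono (le_max_left M 2)) (by simp)
  let L : ℝ := M + K * (1 + M)
  have hL : 1 ≤ L := by
    have : (1 : ℝ) < M := hM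
    nlinarith
  let T (n : ℕ) : Set (List 𝒲) := embTree z (Y : Set 𝒲) (L ^ n)
  have hTmono : Monotone T := fun k n hkn =>
    embTree_mono z subset_rfl (by positivity) (pow_le_pow_right₀ hL hkn)
  have hText (n : ℕ) (s) (hs : s ∈ T n) (m : ℕ) : ∃ u, u.length = m ∧ s ++ u ∈ T (n + 1) := by
    have hLn : 1 ≤ L ^ n := one_le_pow₀ hL
    obtain ⟨u, hum, hu⟩ :=
      exists_append_mem_embTree (by positivity) (by positivity) hM hz hloc hY hs m
    refine ⟨u, hum, embTree_mono z subset_rfl (by positivity) ?_ hu⟩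
    calc L ^ n * M + K * (1 + M) ≤ L ^ n * M + L ^ n * (K * (1 + M)) := by
          gcongr _ + ?_
          exact le_mul_of_one_le_left (by positivity) hLn
      _ = L ^ (n + 1) := by rw [← mul_add, pow_succ]
  refine coe_mul_omega0_le fun n => ?_
  exact (omega0_mul_le_treeRank (fun k => embTree_mem_tree z _ _) hTmono hText
    (nil_mem_embTree z _ _) n).trans (treeRank_le_embIndex z _ (one_le_pow₀ hL))

theorem locallyMinimal_omega_sq_minimal_general (𝒲 : Type) [NormedAddCommGroup 𝒲]
    [NormedSpace ℝ 𝒲] (b : ℕ → 𝒲) {C : ℝ≥0} (hb : HasBasisConst C b) (hloc : LocallyMinimal 𝒲) :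
    IsAlphaMinimal b (Ordinal.omega0 * Ordinal.omega0) :=
  fun _ hz _ _ hY => hloc.omega0_mul_omega0_le_embIndex (hz.hasBasisConst hb) hY

end LocalMinimality

/-- A locally minimal Banach space `𝒲` with a Schauder basis `(e n)` is
`ω²`-minimal. -/
theorem locallyMinimal_omega_sq_minimal
    (𝒲 : Type) [NormedAddCommGroup 𝒲] [NormedSpace ℝ 𝒲] [CompleteSpace 𝒲]
    (e : ℕ → 𝒲) (he : IsSchauderBasis e) (hloc : LocallyMinimal 𝒲) :
    IsAlphaMinimal e (Ordinal.omega0 * Ordinal.omega0) := by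
  obtain ⟨C, hC⟩ := he.exists_hasBasisConst
  exact locallyMinimal_omega_sq_minimal_general 𝒲 e hC hloc

end Rosendal
end

section
/- If a Banach space 𝒲 with Schauder basis (e_n) is tight with constants, then 𝒲 = [e_n] is ω-tight; in fact, for any block sequence (y_n) in 𝒲, if I_0 < I_1 < … are intervals witnessing tightness with constants, then for every infinite A ⊆ ℕ, Emb((y_n), [e_n : n ∉ ⋃_{j∈A} I_j]) ≤ ω. -/
/-!
Let `A` be infinite and `K ≥ 1`. Pick `m ∈ A` with `m ≥ K`. A sequence in the tree
`T((y n), [e n : n ∉ ⋃_{j ∈ A} I j], K)` long enough to cover the indices in `I m` would yield a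
`K`-embedding, hence an `m`-embedding, of `[y n]_{n ∈ I m}` into `[e n]_{n ∉ I m}`. So each tree
has finite height, hence finite rank, and the supremum of these ranks over `K` is at most `ω`.
-/

open Filter Topology

namespace Rosendal

variable {𝒲 : Type} [NormedAddCommGroup 𝒲] [NormedSpace ℝ 𝒲]

/-- The basis `(e n)` is tight with constants: for every block sequence `(y n)` there are
successive intervals `I 0 < I 1 < …` such that for every integer `K ≥ 1`,
`[y n]_{n ∈ I K}` does not embed with constant `K` into `[e n]_{n ∉ I K}`. -/
def TightWithConstants (e : ℕ → 𝒲) : Prop :=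
  ∀ y : ℕ → 𝒲, IsBlockSeq e y →
    ∃ I : ℕ → Finset ℕ, IntervalSeq I ∧
      ∀ K : ℕ, 1 ≤ K →
        ¬KEmbeds (K : ℝ) (closedSpan {v | ∃ n ∈ I K, v = y n})
          (closedSpan {v | ∃ n : ℕ, n ∉ I K ∧ v = e n})

/-- The intervals `(I m)` witness, for the sequence `(y n)`, that `(e n)` is tight with constants;
that the `I m` are successive intervals is a separate condition, `IntervalSeq I`. -/
def WitnessesTightnessWithConstants (e y : ℕ → 𝒲) (I : ℕ → Finset ℕ) : Prop :=
  ∀ K : ℕ, 1 ≤ K →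
    ¬KEmbeds (K : ℝ) (closedSpan {v | ∃ n ∈ I K, v = y n})
      (closedSpan {v | ∃ n : ℕ, n ∉ I K ∧ v = e n})

theorem closedSpan_finset (y : ℕ → 𝒲) (J : Finset ℕ) :
    closedSpan {v | ∃ n ∈ J, v = y n} = Submodule.span ℝ (y '' J) := by
  have hJ : {v | ∃ n ∈ J, v = y n} = y '' J := by
    ext v
    simp [eq_comm]
  have : FiniteDimensional ℝ (Submodule.span ℝ (y '' J)) :=
    .span_of_finite ℝ (J.finite_toSet.image y)
  rw [hJ, closedSpan,
    (Submodule.closed_of_finiteDimensional _).submodule_topologicalClosure_eq]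

theorem residualSpace_le_closedSpan {I : ℕ → Finset ℕ} {A : Set ℕ} {m : ℕ} (b : ℕ → 𝒲)
    (hm : m ∈ A) : residualSpace b I A ≤ closedSpan {v | ∃ n : ℕ, n ∉ I m ∧ v = b n} :=
  Submodule.topologicalClosure_mono <| Submodule.span_mono fun _ ⟨n, hn, hv⟩ => ⟨n, hn m hm, hv⟩

theorem KEmbeds.mono {K M : ℝ} {F F' Y Y' : Submodule ℝ 𝒲} (h : KEmbeds K F Y) (hK : 0 < K)
    (hKM : K ≤ M) (hF : F' ≤ F) (hY : Y ≤ Y') : KEmbeds M F' Y' := by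
  obtain ⟨T, hTY, hT⟩ := h
  refine ⟨T ∘ₗ Submodule.inclusion hF, fun v => hY (hTY _), fun v => ?_⟩
  obtain ⟨hlower, hupper⟩ := hT (Submodule.inclusion hF v)
  constructor
  · calc 1 / M * ‖v‖ ≤ 1 / K * ‖v‖ := by gcongr
      _ ≤ ‖T (Submodule.inclusion hF v)‖ := hlower
  · calc ‖T (Submodule.inclusion hF v)‖ ≤ K * ‖v‖ := hupper
      _ ≤ M * ‖v‖ := by gcongr

theorem kEmbeds_range {V : Type*} [AddCommGroup V] [Module ℝ V] {K : ℝ} {Y : Submodule ℝ 𝒲}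
    (f g : V →ₗ[ℝ] 𝒲) (hg : ∀ c, g c ∈ Y)
    (hfg : ∀ c, 1 / K * ‖f c‖ ≤ ‖g c‖ ∧ ‖g c‖ ≤ K * ‖f c‖) :
    KEmbeds K (LinearMap.range f) Y := by
  obtain ⟨s, hs⟩ := f.rangeRestrict.exists_rightInverse_of_surjective f.range_rangeRestrict
  have hfs (v : LinearMap.range f) : f (s v) = v :=
    congrArg Subtype.val (LinearMap.congr_fun hs v)
  refine ⟨g ∘ₗ s, fun v => hg (s v), fun v => ?_⟩
  have hv := hfg (s v)
  rwa [hfs] at hv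

theorem SeqEquiv.symm {K : ℝ} {k : ℕ} {x y : ℕ → 𝒲} (h : SeqEquiv K k x y) (hK : 0 < K) :
    SeqEquiv K k y x := by
  intro a
  obtain ⟨hlower, hupper⟩ := h a
  rw [one_div, inv_mul_le_iff₀ hK] at hlower ⊢
  exact ⟨hupper, hlower⟩

theorem SeqEquiv.kEmbeds_span {K : ℝ} {k : ℕ} {x y : ℕ → 𝒲} {Y : Submodule ℝ 𝒲}
    (h : SeqEquiv K k x y) (hy : ∀ i < k, y i ∈ Y) :
    KEmbeds K (Submodule.span ℝ (Set.range fun i : Fin k => x i)) Y := by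
  rw [← Fintype.range_linearCombination ℝ]
  refine kEmbeds_range _ (Fintype.linearCombination ℝ fun i : Fin k => y i) (fun c => ?_)
    fun c => ?_
  · rw [Fintype.linearCombination_apply]
    exact Y.sum_smul_mem c fun i _ => hy i i.isLt
  · simpa [Finset.sum_range, Fintype.linearCombination_apply] using
      h fun i => if hi : i < k then c ⟨i, hi⟩ else 0

theorem kEmbeds_of_mem_embTree {K : ℝ} (hK : 0 < K) {y : ℕ → 𝒲} {Y : Submodule ℝ 𝒲}
    {l : List 𝒲} (hl : l ∈ embTree y (Y : Set 𝒲) K) {J : Finset ℕ}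
    (hJ : J ⊆ Finset.range l.length) : KEmbeds K (closedSpan {v | ∃ n ∈ J, v = y n}) Y := by
  obtain ⟨hlY, hequiv⟩ := hl
  have hmem : ∀ i < l.length, l.getD i 0 ∈ Y := fun i hi => by
    rw [List.getD_eq_getElem _ _ hi]
    exact hlY _ (List.getElem_mem hi)
  refine ((hequiv.symm hK).kEmbeds_span hmem).mono hK le_rfl ?_ le_rfl
  rw [closedSpan_finset]
  refine Submodule.span_mono ?_
  rintro _ ⟨n, hn, rfl⟩
  exact ⟨⟨n, Finset.mem_range.1 (hJ hn)⟩, rfl⟩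

theorem acc_rank_le {α : Type*} {r : α → α → Prop} {f : α → Ordinal}
    (hf : ∀ a b, r a b → f a < f b) {a : α} (ha : Acc r a) : ha.rank ≤ f a := by
  induction ha with
  | intro a ha ih =>
    rw [Acc.rank_eq]
    exact Ordinal.iSup_le fun b => Order.succ_le_of_lt ((ih b.1 b.2).trans_lt (hf _ _ b.2))

theorem treeRank_le_of_length_lt {X : Type} {T : Set (List X)} {N : ℕ}
    (hT : ∀ l ∈ T, l.length < N) :
    treeRank T ≤ ((N : Ordinal) : WithTop Ordinal) := by
  have hdecr (t s : T) (hst : s.val <+: t.val ∧ s.val ≠ t.val) :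
      N - 1 - t.val.length < N - 1 - s.val.length := by
    have hle := hst.1.length_le
    have hne : s.val.length ≠ t.val.length := fun h => hst.2 (hst.1.eq_of_length h)
    have hlt := hT _ t.2
    omega
  have hwf : WellFounded (fun t s : T => s.val <+: t.val ∧ s.val ≠ t.val) :=
    Subrelation.wf (hdecr _ _) (measure fun s : T => N - 1 - s.val.length).wf
  rw [treeRank, dif_pos hwf]
  refine WithTop.coe_le_coe.2 (Ordinal.iSup_le fun s => Order.succ_le_of_lt ?_)
  calc (hwf.apply s).rank ≤ ((N - 1 - s.val.length : ℕ) : Ordinal) :=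
        acc_rank_le (f := fun s : T => ((N - 1 - s.val.length : ℕ) : Ordinal))
          (fun t s hst => Nat.cast_lt.2 (hdecr t s hst)) _
    _ < N := by
        have hlt := hT _ s.2
        exact Nat.cast_lt.2 (by omega)

theorem treeRank_embTree_lt_omega0 {K : ℝ} (hK : 0 < K) {y : ℕ → 𝒲} {Y : Submodule ℝ 𝒲}
    {J : Finset ℕ} (hJ : ¬KEmbeds K (closedSpan {v | ∃ n ∈ J, v = y n}) Y) :
    treeRank (embTree y (Y : Set 𝒲) K) < (Ordinal.omega0 : WithTop Ordinal) := by
  have hlength : ∀ l ∈ embTree y (Y : Set 𝒲) K, l.length < J.sup id + 1 := fun l hl => by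
    by_contra! hlong
    exact hJ <| kEmbeds_of_mem_embTree hK hl <|
      J.subset_range_sup_succ.trans (Finset.range_subset_range.2 hlong)
  exact (treeRank_le_of_length_lt hlength).trans_lt <|
    WithTop.coe_lt_coe.2 (Ordinal.natCast_lt_omega0 _)

theorem embIndex_le {x : ℕ → 𝒲} {Y : Set 𝒲} {α : Ordinal}
    (h : ∀ K : ℝ, 1 ≤ K → treeRank (embTree x Y K) ≤ (α : WithTop Ordinal)) :
    embIndex x Y ≤ (α : WithTop Ordinal) := by
  have hfinite : ¬∃ K : ℝ, 1 ≤ K ∧ treeRank (embTree x Y K) = ⊤ := fun ⟨K, hK, htop⟩ =>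
    ((h K hK).trans_lt (WithTop.coe_lt_top α)).ne htop
  rw [embIndex, if_neg hfinite]
  exact WithTop.coe_le_coe.2 <| csSup_le' fun o ⟨K, hK, ho⟩ =>
    WithTop.coe_le_coe.1 (ho.trans_le (h K hK))

theorem embIndex_le_omega0 {y : ℕ → 𝒲} {Y : Submodule ℝ 𝒲}
    (h : ∀ K : ℝ, 1 ≤ K →
      ∃ J : Finset ℕ, ¬KEmbeds K (closedSpan {v | ∃ n ∈ J, v = y n}) Y) :
    embIndex y (Y : Set 𝒲) ≤ (Ordinal.omega0 : WithTop Ordinal) :=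
  embIndex_le fun K hK =>
    let ⟨_, hJ⟩ := h K hK
    (treeRank_embTree_lt_omega0 (one_pos.trans_le hK) hJ).le

theorem WitnessesTightnessWithConstants.embIndex_le_omega0 {e y : ℕ → 𝒲} {I : ℕ → Finset ℕ}
    (h : WitnessesTightnessWithConstants e y I) {A : Set ℕ} (hA : A.Infinite) :
    embIndex y (residualSpace e I A : Set 𝒲) ≤ (Ordinal.omega0 : WithTop Ordinal) := by
  refine Rosendal.embIndex_le_omega0 fun K hK => ?_
  obtain ⟨m, hmA, hKm⟩ := hA.exists_gt ⌈K⌉₊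
  have hKm' : K ≤ m := (Nat.lt_of_ceil_lt hKm).le
  exact ⟨I m, fun hemb => h m (Nat.one_le_of_lt hKm) <|
    hemb.mono (one_pos.trans_le hK) hKm' le_rfl (residualSpace_le_closedSpan e hmA)⟩

theorem TightWithConstants.isAlphaTight_omega0 {e : ℕ → 𝒲} (h : TightWithConstants e) :
    IsAlphaTight e Ordinal.omega0 := fun y hy =>
  let ⟨I, hI, hwit⟩ := h y hy
  ⟨I, hI, fun _ hA => WitnessesTightnessWithConstants.embIndex_le_omega0 hwit hA⟩

theorem tightWithConstants_omega_tight_general (e : ℕ → 𝒲) :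
    (TightWithConstants e → IsAlphaTight e Ordinal.omega0) ∧
    ∀ (y : ℕ → 𝒲) (I : ℕ → Finset ℕ), WitnessesTightnessWithConstants e y I →
      ∀ A : Set ℕ, A.Infinite →
        embIndex y (residualSpace e I A : Set 𝒲) ≤ (Ordinal.omega0 : WithTop Ordinal) :=
  ⟨TightWithConstants.isAlphaTight_omega0, fun _ _ h _ hA => h.embIndex_le_omega0 hA⟩

/-- If `𝒲 = [e n]` is tight with constants then it is `ω`-tight; in fact,
for any block sequence `(y n)`, any intervals witnessing tightness with constants witness
that `Emb((y n), [e n : n ∉ ⋃_{j ∈ A} I j]) ≤ ω` for every infinite `A ⊆ ℕ`. -/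
theorem tightWithConstants_omega_tight
    (𝒲 : Type) [NormedAddCommGroup 𝒲] [NormedSpace ℝ 𝒲] [CompleteSpace 𝒲]
    (e : ℕ → 𝒲) (he : IsSchauderBasis e) (htwc : TightWithConstants e) :
    IsAlphaTight e Ordinal.omega0 ∧
    ∀ y : ℕ → 𝒲, IsBlockSeq e y →
      ∀ I : ℕ → Finset ℕ, IntervalSeq I →
        (∀ K : ℕ, 1 ≤ K →
          ¬KEmbeds (K : ℝ) (closedSpan {v | ∃ n ∈ I K, v = y n})
            (closedSpan {v | ∃ n : ℕ, n ∉ I K ∧ v = e n})) →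
        ∀ A : Set ℕ, A.Infinite →
          embIndex y (residualSpace e I A : Set 𝒲) ≤ (Ordinal.omega0 : WithTop Ordinal) :=
  let ⟨htight, hbound⟩ := tightWithConstants_omega_tight_general e
  ⟨htight htwc, fun y _ I _ => hbound y I⟩

end Rosendal
end

section
/- Ramsey determinacy of adversarial α-games: Let α be a countable ordinal and T ⊆ W^{<ℕ} an arbitrary set of finite sequences of nonzero vectors of W. Then for every block subspace X ⊆ W there is a block subspace Y ⊆ X such that either (1) player II has a strategy in the game A^α_Y to play in T, or (2) player I has a strategy in the game B^α_Y to play in the complement of T. -/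
open Filter Topology

namespace Rosendal

variable {𝒲 : Type} [NormedAddCommGroup 𝒲] [NormedSpace ℝ 𝒲]

/-- The outcome `l = (x 0, …, x k)` satisfies `(x 0, …, x k) ∼_K (y 0, …, y k)`. -/
def OutcomeEquiv (K : ℝ) (l : List 𝒲) (y : ℕ → 𝒲) : Prop :=
  SeqEquiv K l.length (fun i => l.getD i 0) y

/-- The outcome `l = (u 0, v 0, u 1, v 1, …, u k, v k)` satisfies
`(u 0, …, u k) ∼_K (v 0, …, v k)`. -/
def PairOutcomeEquiv (K : ℝ) (l : List 𝒲) : Prop :=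
  SeqEquiv K (l.length / 2) (fun i => l.getD (2 * i) 0) (fun i => l.getD (2 * i + 1) 0)

/-- The setting of Section 2 of the paper: a Banach space `𝒲` with a Schauder basis
`(e n)`, a countable subfield `𝔽 ⊆ ℝ` closed under the norms of finite `𝔽`-linear
combinations of the basis, and the countable `𝔽`-vector space `W` spanned by `(e n)`. -/
structure Frame (𝒲 : Type) [NormedAddCommGroup 𝒲] [NormedSpace ℝ 𝒲] : Type where
  e : ℕ → 𝒲
  complete : CompleteSpace 𝒲
  basis : IsSchauderBasis e
  𝔽 : Subfield ℝ
  countable : (𝔽 : Set ℝ).Countable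
  norm_mem : ∀ (s : Finset ℕ) (a : ℕ → ℝ), (∀ i ∈ s, a i ∈ 𝔽) →
    ‖∑ i ∈ s, a i • e i‖ ∈ 𝔽

namespace Frame

variable {𝒲 : Type} [NormedAddCommGroup 𝒲] [NormedSpace ℝ 𝒲] (ctx : Frame 𝒲)

/-- The `𝔽`-linear span of a set of vectors. -/
def fspan (S : Set 𝒲) : Set 𝒲 :=
  {v | ∃ t : Finset 𝒲, ↑t ⊆ S ∧ ∃ c : 𝒲 → ℝ, (∀ w, c w ∈ ctx.𝔽) ∧
    v = ∑ w ∈ t, c w • w}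

/-- The countable `𝔽`-vector space `W` with basis `(e n)`. -/
def W : Set 𝒲 := ctx.fspan (Set.range ctx.e)

/-- `(y n)` is a block sequence with respect to the reference block basis `(b n)`:
a sequence of nonzero vectors of the `𝔽`-span of `(b n)` with successive supports. -/
def BlockSeqRel (b y : ℕ → 𝒲) : Prop :=
  (∀ n, y n ∈ ctx.fspan (Set.range b)) ∧ (∀ n, y n ≠ 0) ∧
  ∃ D : ℕ → Finset ℕ, (∀ n, SuppIn b (y n) (D n)) ∧
    ∀ n, ∀ i ∈ D n, ∀ j ∈ D (n + 1), i < j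

/-- `(y n)` is a block sequence (with respect to the basis `(e n)` of `W`). -/
def IsBlockSeq (y : ℕ → 𝒲) : Prop := ctx.BlockSeqRel ctx.e y

/-- `Y` is a block subspace of `X`: the `𝔽`-span of an infinite block sequence of
vectors of `X`. -/
def IsBlockSubspaceOf (Y X : Set 𝒲) : Prop :=
  ∃ y : ℕ → 𝒲, ctx.IsBlockSeq y ∧ (∀ n, y n ∈ X) ∧ Y = ctx.fspan (Set.range y)

/-- `Y` is a block subspace of `W`. -/
def IsBlockSubspace (Y : Set 𝒲) : Prop := ctx.IsBlockSubspaceOf Y ctx.W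

/-- `F` is a finite-dimensional `𝔽`-subspace of `X`. -/
def IsFinDimIn (F X : Set 𝒲) : Prop :=
  ∃ t : Finset 𝒲, ↑t ⊆ X ∧ F = ctx.fspan ↑t

/-- `n < F`: every vector of `F` is supported on basis vectors of index `> n`. -/
def NatLt (n : ℕ) (F : Set 𝒲) : Prop :=
  ∀ x ∈ F, ∃ s : Finset ℕ, SuppIn ctx.e x s ∧ ∀ i ∈ s, n < i

/-- `V` is an `𝔽`-subspace of `𝒲`. -/
def IsSubspace (V : Set 𝒲) : Prop :=
  (0 : 𝒲) ∈ V ∧ (∀ u v : 𝒲, u ∈ V → v ∈ V → u + v ∈ V) ∧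
    ∀ c : ℝ, c ∈ ctx.𝔽 → ∀ v ∈ V, c • v ∈ V

/-- `V` is infinite-dimensional (not contained in a finitely generated subspace). -/
def IsInfDim (V : Set 𝒲) : Prop :=
  ¬∃ t : Finset 𝒲, V ⊆ ctx.fspan ↑t

/-- Game values of the asymptotic game `F^β_X`, for player II, computed by transfinite
recursion on the ordinal bound.  `IIWinsF X S β Facc vec` states: in the asymptotic game
below `X`, from a position where the vectors `vec` have been played and the
finite-dimensional subspaces played by II span `Facc`, and where I must now play a natural
number together with an ordinal `< β`, player II has a strategy so that the final outcome
lies in `S`. -/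
noncomputable def IIWinsF (X : Set 𝒲) (S : Set (List 𝒲)) :
    Ordinal → Set 𝒲 → List 𝒲 → Prop :=
  WellFounded.fix (C := fun _ : Ordinal => Set 𝒲 → List 𝒲 → Prop) Ordinal.lt_wf
    (fun β ih Facc vec =>
      ∀ n : ℕ, ∀ ξ : Ordinal, ∀ hξ : ξ < β,
        ∃ F : Set 𝒲, ctx.IsFinDimIn F X ∧ ctx.NatLt n F ∧
          ∃ x : 𝒲, x ≠ 0 ∧ x ∈ ctx.fspan (Facc ∪ F) ∧
            (ξ = 0 → vec ++ [x] ∈ S) ∧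
            (ξ ≠ 0 → ih ξ hξ (ctx.fspan (Facc ∪ F)) (vec ++ [x])))

/-- Player II has a strategy in the asymptotic game `F^β_X` to play an outcome in `S`. -/
noncomputable def IIStratF (X : Set 𝒲) (β : Ordinal) (S : Set (List 𝒲)) : Prop :=
  (β = 0 → ([] : List 𝒲) ∈ S) ∧ (β ≠ 0 → ctx.IIWinsF X S β (ctx.fspan ∅) [])

/-- Game values of the asymptotic game `F^β_X` for player I (who plays the integers and
the ordinals, trying to steer the outcome into `S`). -/
noncomputable def IWinsF (X : Set 𝒲) (S : Set (List 𝒲)) :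
    Ordinal → Set 𝒲 → List 𝒲 → Prop :=
  WellFounded.fix (C := fun _ : Ordinal => Set 𝒲 → List 𝒲 → Prop) Ordinal.lt_wf
    (fun β ih Facc vec =>
      ∃ n : ℕ, ∃ ξ : Ordinal, ∃ hξ : ξ < β,
        ∀ F : Set 𝒲, ctx.IsFinDimIn F X → ctx.NatLt n F →
        ∀ x : 𝒲, x ≠ 0 → x ∈ ctx.fspan (Facc ∪ F) →
          (ξ = 0 → vec ++ [x] ∈ S) ∧
          (ξ ≠ 0 → ih ξ hξ (ctx.fspan (Facc ∪ F)) (vec ++ [x])))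

/-- Player I has a strategy in the asymptotic game `F^β_X` to play an outcome in `S`. -/
noncomputable def IStratF (X : Set 𝒲) (β : Ordinal) (S : Set (List 𝒲)) : Prop :=
  (β = 0 → ([] : List 𝒲) ∈ S) ∧ (β ≠ 0 → ctx.IWinsF X S β (ctx.fspan ∅) [])

/-- Game values of the Gowers game `G^α_X` for player II. -/
noncomputable def IIWinsG (X : Set 𝒲) (S : Set (List 𝒲)) :
    Ordinal → Set 𝒲 → List 𝒲 → Prop :=
  WellFounded.fix (C := fun _ : Ordinal => Set 𝒲 → List 𝒲 → Prop) Ordinal.lt_wf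
    (fun α ih Facc vec =>
      ∀ Y : Set 𝒲, ctx.IsBlockSubspaceOf Y X →
      ∀ ξ : Ordinal, ∀ hξ : ξ < α,
        ∃ F : Set 𝒲, ctx.IsFinDimIn F Y ∧
          ∃ x : 𝒲, x ≠ 0 ∧ x ∈ ctx.fspan (Facc ∪ F) ∧
            (ξ = 0 → vec ++ [x] ∈ S) ∧
            (ξ ≠ 0 → ih ξ hξ (ctx.fspan (Facc ∪ F)) (vec ++ [x])))

/-- Player II has a strategy in the generalised Gowers game `G^α_X` to play in `S`. -/
noncomputable def IIStratG (X : Set 𝒲) (α : Ordinal) (S : Set (List 𝒲)) : Prop :=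
  (α = 0 → ([] : List 𝒲) ∈ S) ∧ (α ≠ 0 → ctx.IIWinsG X S α (ctx.fspan ∅) [])

/-- Game values of the adversarial game `A^α_X` for player II (who plays the integers,
the finite-dimensional subspaces `F_l ⊆ Y_l` and the vectors `y_l`). -/
noncomputable def IIWinsA (X : Set 𝒲) (S : Set (List 𝒲)) :
    Ordinal → Set 𝒲 → Set 𝒲 → List 𝒲 → Prop :=
  WellFounded.fix (C := fun _ : Ordinal => Set 𝒲 → Set 𝒲 → List 𝒲 → Prop)
    Ordinal.lt_wf
    (fun α ih Eacc Facc vec =>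
      ∃ n : ℕ,
        ∀ E : Set 𝒲, ctx.IsFinDimIn E X → ctx.NatLt n E →
        ∀ x : 𝒲, x ≠ 0 → x ∈ ctx.fspan (Eacc ∪ E) →
        ∀ Y : Set 𝒲, ctx.IsBlockSubspaceOf Y X →
        ∀ ξ : Ordinal, ∀ hξ : ξ < α,
          ∃ F : Set 𝒲, ctx.IsFinDimIn F Y ∧
            ∃ y : 𝒲, y ≠ 0 ∧ y ∈ ctx.fspan (Facc ∪ F) ∧
              (ξ = 0 → vec ++ [x, y] ∈ S) ∧
              (ξ ≠ 0 → ih ξ hξ (ctx.fspan (Eacc ∪ E)) (ctx.fspan (Facc ∪ F))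
                (vec ++ [x, y])))

/-- Player II has a strategy in the adversarial game `A^α_X` to play in `S`. -/
noncomputable def IIStratA (X : Set 𝒲) (α : Ordinal) (S : Set (List 𝒲)) : Prop :=
  (α = 0 → ([] : List 𝒲) ∈ S) ∧
  (α ≠ 0 → ctx.IIWinsA X S α (ctx.fspan ∅) (ctx.fspan ∅) [])

/-- Game values of the adversarial game `B^α_X` for player I (who plays the
finite-dimensional subspaces `E_l ⊆ Y_l`, the vectors `x_l`, the integers and the
ordinals). -/
noncomputable def IWinsB (X : Set 𝒲) (S : Set (List 𝒲)) :
    Ordinal → Set 𝒲 → Set 𝒲 → List 𝒲 → Prop :=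
  WellFounded.fix (C := fun _ : Ordinal => Set 𝒲 → Set 𝒲 → List 𝒲 → Prop)
    Ordinal.lt_wf
    (fun α ih Eacc Facc vec =>
      ∀ Y : Set 𝒲, ctx.IsBlockSubspaceOf Y X →
        ∃ E : Set 𝒲, ctx.IsFinDimIn E Y ∧
          ∃ x : 𝒲, x ≠ 0 ∧ x ∈ ctx.fspan (Eacc ∪ E) ∧
            ∃ n : ℕ, ∃ ξ : Ordinal, ∃ hξ : ξ < α,
              ∀ F : Set 𝒲, ctx.IsFinDimIn F X → ctx.NatLt n F →
              ∀ y : 𝒲, y ≠ 0 → y ∈ ctx.fspan (Facc ∪ F) →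
                (ξ = 0 → vec ++ [x, y] ∈ S) ∧
                (ξ ≠ 0 → ih ξ hξ (ctx.fspan (Eacc ∪ E)) (ctx.fspan (Facc ∪ F))
                  (vec ++ [x, y])))

/-- Player I has a strategy in the adversarial game `B^α_X` to play in `S`. -/
noncomputable def IStratB (X : Set 𝒲) (α : Ordinal) (S : Set (List 𝒲)) : Prop :=
  (α = 0 → ([] : List 𝒲) ∈ S) ∧
  (α ≠ 0 → ctx.IWinsB X S α (ctx.fspan ∅) (ctx.fspan ∅) [])

/-- Game values of the adversarial game `B^α_X` for player II (who plays the block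
subspaces `Y_l`, the finite-dimensional subspaces `F_l` and the vectors `y_l`). -/
noncomputable def IIWinsB (X : Set 𝒲) (S : Set (List 𝒲)) :
    Ordinal → Set 𝒲 → Set 𝒲 → List 𝒲 → Prop :=
  WellFounded.fix (C := fun _ : Ordinal => Set 𝒲 → Set 𝒲 → List 𝒲 → Prop)
    Ordinal.lt_wf
    (fun α ih Eacc Facc vec =>
      ∃ Y : Set 𝒲, ctx.IsBlockSubspaceOf Y X ∧
        ∀ E : Set 𝒲, ctx.IsFinDimIn E Y →
        ∀ x : 𝒲, x ≠ 0 → x ∈ ctx.fspan (Eacc ∪ E) →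
        ∀ n : ℕ, ∀ ξ : Ordinal, ∀ hξ : ξ < α,
          ∃ F : Set 𝒲, ctx.IsFinDimIn F X ∧ ctx.NatLt n F ∧
            ∃ y : 𝒲, y ≠ 0 ∧ y ∈ ctx.fspan (Facc ∪ F) ∧
              (ξ = 0 → vec ++ [x, y] ∈ S) ∧
              (ξ ≠ 0 → ih ξ hξ (ctx.fspan (Eacc ∪ E)) (ctx.fspan (Facc ∪ F))
                (vec ++ [x, y])))

/-- Player II has a strategy in the adversarial game `B^α_X` to play in `S`. -/
noncomputable def IIStratB (X : Set 𝒲) (α : Ordinal) (S : Set (List 𝒲)) : Prop :=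
  (α = 0 → ([] : List 𝒲) ∈ S) ∧
  (α ≠ 0 → ctx.IIWinsB X S α (ctx.fspan ∅) (ctx.fspan ∅) [])

end Frame

end Rosendal

/-!
An adversarial game is unravelled one round at a time, so all that matters about a play is its
*position*: the spans of the subspaces played so far, the vectors played so far and the current
ordinal. Since `W` and `α` are countable, so is the set of positions. Diagonalising, one finds a
block subspace `Y ⊆ X` which *decides*, at every position, whether II wins the game `A` from there:
either II wins in `Y`, or II wins in no `Z ⊆ Y`, in which case the position is called *lost*.
Diagonalising once more, one finds `V ⊆ Y` which decides, at every position where II is about to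
move, whether some integer `n` forces all replies beyond `n` into lost positions.

At a lost position, II does not win in any `Z ⊆ V`, so I has moves `E`, `x`, `ξ` in `Z` and a
`U ⊆ Z` such that every reply inside `U` leads to a position which is not won in `Z`, hence is lost.
By the choice of `V` the same is true of every reply in `V` beyond some `n`, and playing `E`, `x`,
`ξ` and that `n`, I keeps the position lost until the game `B` ends.
-/

namespace Rosendal

section Decides

variable {P ι : Type*} [Preorder P]

/-- `Y` decides the property `Q`, as in forcing: it holds at `Y` or nowhere below `Y`. -/
def Decides (Y : P) (Q : P → Prop) : Prop := Q Y ∨ ∀ Z ≤ Y, ¬Q Z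

theorem exists_le_decides (X : P) (Q : P → Prop) : ∃ Y ≤ X, Decides Y Q := by
  by_cases h : ∃ Y ≤ X, Q Y
  · obtain ⟨Y, hYX, hQ⟩ := h
    exact ⟨Y, hYX, .inl hQ⟩
  · exact ⟨X, le_rfl, .inr fun Z hZ hQ => h ⟨Z, hZ, hQ⟩⟩

variable {r : P → P → Prop} (hr : ∀ ⦃Y X⦄, Y ≤ X → r Y X)
  (hcompat : ∀ ⦃X Y Z⦄, r Y X → Z ≤ Y → ∃ Z' ≤ Z, Z' ≤ X)

include hr hcompat

theorem Decides.of_rel {Q : P → Prop} (hQ : ∀ ⦃Y X⦄, r Y X → Q X → Q Y) {X Y : P} (hYX : r Y X)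
    (h : Decides X Q) : Decides Y Q := by
  refine h.imp (hQ hYX) fun hX Z hZ hQZ => ?_
  obtain ⟨Z', hZ'Z, hZ'X⟩ := hcompat hYX hZ
  exact hX Z' hZ'X (hQ (hr hZ'Z) hQZ)

theorem exists_le_forall_decides
    (hdiag : ∀ X : ℕ → P, Antitone X → ∃ Y ≤ X 0, ∀ n, r Y (X n)) [Countable ι]
    {Q : ι → P → Prop} (hQ : ∀ i ⦃Y X⦄, r Y X → Q i X → Q i Y) (X : P) :
    ∃ Y ≤ X, ∀ i, Decides Y (Q i) := by
  rcases isEmpty_or_nonempty ι with _ | _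
  · exact ⟨X, le_rfl, isEmptyElim⟩
  obtain ⟨f, hf⟩ := exists_surjective_nat ι
  choose below below_le below_decides using fun n A => exists_le_decides A (Q (f n))
  let S : ℕ → P := fun n => Nat.rec X below n
  have S_anti : Antitone S := antitone_nat_of_succ_le fun n => below_le n (S n)
  obtain ⟨Y, hYX, hY⟩ := hdiag S S_anti
  refine ⟨Y, hYX, fun i => ?_⟩
  obtain ⟨n, rfl⟩ := hf i
  exact (below_decides n (S n)).of_rel hr hcompat (hQ _) (hY (n + 1))

end Decides

universe u

theorem countable_Iic_of_lt_ord_aleph_one {α : Ordinal.{u}} (hα : α < (Cardinal.aleph 1).ord) :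
    (Set.Iic α).Countable := by
  rw [Cardinal.lt_ord, Cardinal.lt_aleph_one_iff] at hα
  rw [← Set.Iio_insert]
  refine Set.Countable.insert α ?_
  rw [← Cardinal.le_aleph0_iff_set_countable, Cardinal.mk_Iio_ordinal]
  exact Cardinal.lift_le_aleph0.2 hα

section Supports

theorem lt_of_successive {ι : Type*} [Preorder ι] {D : ℕ → Finset ι} (hne : ∀ n, (D n).Nonempty)
    (hD : ∀ n, ∀ i ∈ D n, ∀ j ∈ D (n + 1), i < j) {k n : ℕ} (hkn : k < n) :
    ∀ i ∈ D k, ∀ j ∈ D n, i < j := by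
  induction n, hkn using Nat.le_induction with
  | base => exact hD k
  | succ n _ ih =>
    intro i hi j hj
    obtain ⟨l, hl⟩ := hne n
    exact (ih i hi l hl).trans (hD n l hl j hj)

theorem le_of_mem_successive {D : ℕ → Finset ℕ} (hne : ∀ n, (D n).Nonempty)
    (hD : ∀ n, ∀ i ∈ D n, ∀ j ∈ D (n + 1), i < j) (n : ℕ) : ∀ i ∈ D n, n ≤ i := by
  induction n with
  | zero => exact fun i _ => i.zero_le
  | succ n ih =>
    intro i hi
    obtain ⟨l, hl⟩ := hne n
    exact (ih l hl).trans_lt (hD n l hl i hi)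

variable {𝒲 : Type} [NormedAddCommGroup 𝒲] [NormedSpace ℝ 𝒲]

theorem IsSchauderBasis.linearIndependent {e : ℕ → 𝒲} (he : IsSchauderBasis e) :
    LinearIndependent ℝ e := by
  rw [linearIndependent_iff]
  intro l hl
  have hl_lim : Tendsto (fun N => ∑ i ∈ Finset.range N, l i • e i) atTop (𝓝 0) := by
    rw [← hl]
    exact (hasSum_sum_of_ne_finset_zero fun i hi => by
      rw [Finsupp.notMem_support_iff.1 hi, zero_smul]).tendsto_sum_nat
  have zero_lim : Tendsto (fun N => ∑ i ∈ Finset.range N, (0 : ℝ) • e i) atTop (𝓝 0) := by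
    simp
  exact DFunLike.coe_injective ((he 0).unique hl_lim zero_lim)

theorem mem_span_image_iff_exists_suppIn {b : ℕ → 𝒲} {x : 𝒲} {A : Set ℕ} :
    x ∈ Submodule.span ℝ (b '' A) ↔ ∃ s : Finset ℕ, SuppIn b x s ∧ ∀ i ∈ s, i ∈ A := by
  constructor
  · intro h
    obtain ⟨l, hl, rfl⟩ := (Finsupp.mem_span_image_iff_linearCombination ℝ).1 h
    exact ⟨l.support, ⟨l, rfl⟩, hl⟩
  · rintro ⟨s, ⟨a, rfl⟩, hs⟩
    exact Submodule.sum_mem _ fun i hi =>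
      Submodule.smul_mem _ _ (Submodule.subset_span ⟨i, hs i hi, rfl⟩)

theorem eq_zero_of_add_mem_span_image {R M ι : Type*} [Ring R] [Nontrivial R] [AddCommGroup M]
    [Module R M] {b : ι → M} (hb : LinearIndependent R b) {A B C : Set ι}
    (hAB : Disjoint A B) (hAC : Disjoint A C) {u w : M} (hu : u ∈ Submodule.span R (b '' A))
    (hw : w ∈ Submodule.span R (b '' B)) (huw : u + w ∈ Submodule.span R (b '' C)) : u = 0 := by
  have huCB : u ∈ Submodule.span R (b '' (C ∪ B)) := by
    rw [Set.image_union, Submodule.span_union]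
    simpa only [add_sub_cancel_right] using Submodule.sub_mem_sup huw hw
  exact Submodule.disjoint_def.1 (hb.disjoint_span_image (hAC.union_right hAB)) u hu huCB

end Supports

namespace Frame

variable {𝒲 : Type} [NormedAddCommGroup 𝒲] [NormedSpace ℝ 𝒲] (ctx : Frame 𝒲)

section Span

variable {ctx} {S X Y F : Set 𝒲} {m n : ℕ}

theorem fspan_eq_span : ctx.fspan S = Submodule.span ctx.𝔽 S := by
  ext v
  constructor
  · rintro ⟨t, ht, c, hc, rfl⟩
    exact Submodule.sum_mem _ fun w hw =>
      Submodule.smul_mem _ (⟨c w, hc w⟩ : ctx.𝔽) (Submodule.subset_span (ht hw))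
  · intro h
    obtain ⟨f, t, ht, -, rfl⟩ := Submodule.mem_span_iff_exists_finset_subset.1 h
    exact ⟨t, ht, fun w => f w, fun w => (f w).2, rfl⟩

theorem subset_fspan : S ⊆ ctx.fspan S := by
  rw [fspan_eq_span]
  exact Submodule.subset_span

theorem fspan_fspan : ctx.fspan (ctx.fspan S) = ctx.fspan S := by
  simp only [fspan_eq_span, Submodule.span_eq]

theorem fspan_subset (hX : ctx.fspan X = X) (h : S ⊆ X) : ctx.fspan S ⊆ X := by
  rw [← hX, fspan_eq_span, fspan_eq_span]
  exact Submodule.span_mono h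

theorem fspan_subset_submodule {V : Submodule ℝ 𝒲} (h : S ⊆ V) : ctx.fspan S ⊆ V := by
  rintro x ⟨t, ht, c, -, rfl⟩
  exact Submodule.sum_mem _ fun w hw => V.smul_mem _ (h (ht hw))

variable (ctx) in
/-- The real span of the basis vectors of index `> m`; thus `m < F` means `F ⊆ ctx.tail m`. -/
def tail (m : ℕ) : Submodule ℝ 𝒲 := Submodule.span ℝ (ctx.e '' Set.Ioi m)

theorem tail_antitone : Antitone ctx.tail := fun _ _ h =>
  Submodule.span_mono (Set.image_mono (Set.Ioi_subset_Ioi h))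

theorem natLt_iff_subset_tail : ctx.NatLt n F ↔ F ⊆ ctx.tail n :=
  forall₂_congr fun _ _ => mem_span_image_iff_exists_suppIn.symm

theorem NatLt.mono (hF : ctx.NatLt n F) (h : m ≤ n) : ctx.NatLt m F :=
  natLt_iff_subset_tail.2 ((natLt_iff_subset_tail.1 hF).trans (tail_antitone h))

variable (ctx) in
/-- `Y ⊆* X`: every vector of `Y` supported far enough lies in `X`. -/
def AlmostSubset (Y X : Set 𝒲) : Prop := ∃ m, Y ∩ ctx.tail m ⊆ X

theorem AlmostSubset.of_subset (h : Y ⊆ X) : ctx.AlmostSubset Y X :=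
  ⟨0, Set.inter_subset_left.trans h⟩

end Span

section FinDim

variable {ctx} {X Y E F : Set 𝒲}

theorem IsFinDimIn.mono (hE : ctx.IsFinDimIn E Y) (h : Y ⊆ X) : ctx.IsFinDimIn E X := by
  obtain ⟨t, ht, rfl⟩ := hE
  exact ⟨t, ht.trans h, rfl⟩

theorem IsFinDimIn.of_subset (hE : ctx.IsFinDimIn E Y) (h : E ⊆ X) : ctx.IsFinDimIn E X := by
  obtain ⟨t, -, rfl⟩ := hE
  exact ⟨t, subset_fspan.trans h, rfl⟩

theorem IsFinDimIn.subset (hE : ctx.IsFinDimIn E X) (hX : ctx.fspan X = X) : E ⊆ X := by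
  obtain ⟨t, ht, rfl⟩ := hE
  exact fspan_subset hX ht

theorem IsFinDimIn.fspan_union (hE : ctx.IsFinDimIn E X) (hF : ctx.IsFinDimIn F X) :
    ctx.IsFinDimIn (ctx.fspan (E ∪ F)) X := by
  classical
  obtain ⟨s, hs, rfl⟩ := hE
  obtain ⟨t, ht, rfl⟩ := hF
  refine ⟨s ∪ t, by simp [hs, ht], ?_⟩
  simp only [fspan_eq_span, Submodule.span_union, Finset.coe_union, Submodule.span_eq]

theorem isFinDimIn_fspan_empty : ctx.IsFinDimIn (ctx.fspan ∅) X := ⟨∅, by simp, by simp⟩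

theorem countable_setOf_isFinDimIn (hX : X.Countable) : {E | ctx.IsFinDimIn E X}.Countable := by
  refine ((Set.countable_ofPred_finite_subset hX).image ctx.fspan).mono ?_
  rintro E ⟨t, ht, rfl⟩
  exact ⟨t, ⟨t.finite_toSet, ht⟩, rfl⟩

variable (ctx) in
theorem fspan_W : ctx.fspan ctx.W = ctx.W := fspan_fspan

variable (ctx) in
theorem countable_W : ctx.W.Countable := by
  have : Countable ctx.𝔽 := ctx.countable.to_subtype
  rw [W, fspan_eq_span, ← Finsupp.range_linearCombination]
  exact Set.countable_range _

end FinDim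

section BlockSubspace

variable {ctx} {X Y : Set 𝒲} {y : ℕ → 𝒲}

theorem IsBlockSeq.exists_supports (hy : ctx.IsBlockSeq y) :
    ∃ D : ℕ → Finset ℕ, (∀ n, SuppIn ctx.e (y n) (D n)) ∧ (∀ n, (D n).Nonempty) ∧
      ∀ n, ∀ i ∈ D n, ∀ j ∈ D (n + 1), i < j := by
  obtain ⟨-, hy0, D, hyD, hD⟩ := hy
  refine ⟨D, hyD, fun n => Finset.nonempty_iff_ne_empty.2 fun hempty => hy0 n ?_, hD⟩
  obtain ⟨a, ha⟩ := hyD n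
  rw [ha, hempty, Finset.sum_empty]

theorem IsBlockSeq.mem_tail (hy : ctx.IsBlockSeq y) {m n : ℕ} (hmn : m < n) :
    y n ∈ ctx.tail m := by
  obtain ⟨D, hyD, hne, hD⟩ := hy.exists_supports
  exact mem_span_image_iff_exists_suppIn.2
    ⟨D n, hyD n, fun i hi => hmn.trans_le (le_of_mem_successive hne hD n i hi)⟩

theorem IsBlockSeq.comp_add (hy : ctx.IsBlockSeq y) (k : ℕ) :
    ctx.IsBlockSeq fun n => y (k + n) := by
  obtain ⟨hyW, hy0, D, hyD, hD⟩ := hy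
  exact ⟨fun n => hyW _, fun n => hy0 _, fun n => D (k + n), fun n => hyD _, fun n => hD (k + n)⟩

theorem IsBlockSeq.fspan_almostSubset (hy : ctx.IsBlockSeq y) (hX : ctx.fspan X = X) {N : ℕ}
    (hyX : ∀ n, N ≤ n → y n ∈ X) : ctx.AlmostSubset (ctx.fspan (Set.range y)) X := by
  obtain ⟨D, hyD, hne, hD⟩ := hy.exists_supports
  let A : Finset ℕ := (Finset.range N).biUnion D
  let B : Set ℕ := ⋃ n ≥ N, ↑(D n)
  refine ⟨A.sup id, fun v ⟨hv, hv_tail⟩ => ?_⟩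
  -- In `v = u + w`, the part `u` from the `y n`, `n < N`, is `0`: `v` is supported past them.
  have hrange : Set.range y = y '' Set.Iio N ∪ y '' Set.Ici N := by
    rw [← Set.image_union, Set.Iio_union_Ici, Set.image_univ]
  rw [fspan_eq_span, hrange, Submodule.span_union, SetLike.mem_coe, Submodule.mem_sup] at hv
  obtain ⟨u, hu, w, hw, rfl⟩ := hv
  rw [← SetLike.mem_coe, ← fspan_eq_span] at hu hw
  have hwX : w ∈ X := fspan_subset hX (Set.image_subset_iff.2 hyX) hw
  have huA : u ∈ Submodule.span ℝ (ctx.e '' A) := by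
    refine fspan_subset_submodule (Set.image_subset_iff.2 fun n hn => ?_) hu
    exact mem_span_image_iff_exists_suppIn.2
      ⟨D n, hyD n, fun i hi => Finset.mem_biUnion.2 ⟨n, Finset.mem_range.2 hn, hi⟩⟩
  have hwB : w ∈ Submodule.span ℝ (ctx.e '' B) := by
    refine fspan_subset_submodule (Set.image_subset_iff.2 fun n hn => ?_) hw
    exact mem_span_image_iff_exists_suppIn.2 ⟨D n, hyD n, fun i hi => Set.mem_biUnion hn hi⟩
  have hAB : Disjoint (A : Set ℕ) B := by
    rw [Set.disjoint_left]
    intro i hiA hiB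
    obtain ⟨k, hk, hik⟩ := Finset.mem_biUnion.1 hiA
    obtain ⟨n, hn, hin⟩ := Set.mem_iUnion₂.1 hiB
    exact (lt_of_successive hne hD ((Finset.mem_range.1 hk).trans_le hn) i hik i hin).false
  have hA_tail : Disjoint (A : Set ℕ) (Set.Ioi (A.sup id)) :=
    Set.disjoint_left.2 fun _ hi => (Finset.le_sup (f := id) hi).not_gt
  have hu0 : u = 0 :=
    eq_zero_of_add_mem_span_image ctx.basis.linearIndependent hAB hA_tail huA hwB hv_tail
  rwa [hu0, zero_add]

variable (ctx) in
/-- The block subspaces of `W`, ordered by inclusion; for these, `Y ≤ X` says that `Y` is a block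
subspace of `X`. -/
abbrev BlockSubspace : Type := {Y : Set 𝒲 // ctx.IsBlockSubspace Y}

theorem BlockSubspace.fspan_coe (Y : ctx.BlockSubspace) : ctx.fspan (Y : Set 𝒲) = Y := by
  obtain ⟨_, y, -, -, rfl⟩ := Y
  exact fspan_fspan

theorem BlockSubspace.subset_W (Y : ctx.BlockSubspace) : (Y : Set 𝒲) ⊆ ctx.W := by
  obtain ⟨_, y, -, hyW, rfl⟩ := Y
  exact fspan_subset ctx.fspan_W (Set.range_subset_iff.2 hyW)

theorem isBlockSubspaceOf_coe_iff {X : ctx.BlockSubspace} :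
    ctx.IsBlockSubspaceOf Y X ↔ ∃ Z : ctx.BlockSubspace, Z ≤ X ∧ (Z : Set 𝒲) = Y := by
  constructor
  · rintro ⟨y, hy, hyX, rfl⟩
    exact ⟨⟨_, y, hy, hy.1, rfl⟩, fspan_subset X.fspan_coe (Set.range_subset_iff.2 hyX), rfl⟩
  · rintro ⟨⟨_, y, hy, hyW, rfl⟩, hZX, rfl⟩
    exact ⟨y, hy, fun n => hZX (subset_fspan ⟨n, rfl⟩), rfl⟩

theorem BlockSubspace.exists_le_subset_tail (Y : ctx.BlockSubspace) (m : ℕ) :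
    ∃ Z ≤ Y, (Z : Set 𝒲) ⊆ ctx.tail m := by
  obtain ⟨_, y, hy, -, rfl⟩ := Y
  have hz := hy.comp_add (m + 1)
  refine ⟨⟨_, _, hz, hz.1, rfl⟩, ?_, ?_⟩
  · exact fspan_subset fspan_fspan (Set.range_subset_iff.2 fun n => subset_fspan ⟨_, rfl⟩)
  · exact fspan_subset_submodule (Set.range_subset_iff.2 fun n => hy.mem_tail (by omega))

theorem BlockSubspace.exists_le_le_of_almostSubset ⦃X Y Z : ctx.BlockSubspace⦄
    (hYX : ctx.AlmostSubset Y X) (hZY : Z ≤ Y) : ∃ Z' ≤ Z, Z' ≤ X := by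
  obtain ⟨m, hm⟩ := hYX
  obtain ⟨Z', hZ'Z, hZ'm⟩ := Z.exists_le_subset_tail m
  exact ⟨Z', hZ'Z, fun v hv => hm ⟨hZY (hZ'Z hv), hZ'm hv⟩⟩

theorem BlockSubspace.exists_mem_ne_zero_suppIn (Y : ctx.BlockSubspace) (m : ℕ) :
    ∃ v ∈ (Y : Set 𝒲), v ≠ 0 ∧ ∃ s : Finset ℕ, SuppIn ctx.e v s ∧ ∀ i ∈ s, m < i := by
  obtain ⟨_, y, hy, -, rfl⟩ := Y
  exact ⟨y (m + 1), subset_fspan ⟨_, rfl⟩, hy.2.1 _,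
    mem_span_image_iff_exists_suppIn.1 (hy.mem_tail m.lt_succ_self)⟩

theorem BlockSubspace.exists_isBlockSeq_mem (X : ℕ → ctx.BlockSubspace) :
    ∃ y, ctx.IsBlockSeq y ∧ ∀ n, y n ∈ (X n : Set 𝒲) := by
  choose v hvX hv0 D hvD hD using fun n => (X n).exists_mem_ne_zero_suppIn
  let m : ℕ → ℕ := fun n => Nat.rec 0 (fun n k => (D n k).sup id) n
  refine ⟨fun n => v n (m n), ⟨fun n => (X n).subset_W (hvX _ _), fun n => hv0 _ _,
    fun n => D n (m n), fun n => hvD _ _, fun n i hi j hj => ?_⟩, fun n => hvX _ _⟩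
  exact (Finset.le_sup (f := id) hi).trans_lt (hD (n + 1) (m (n + 1)) j hj)

theorem BlockSubspace.exists_le_forall_almostSubset (X : ℕ → ctx.BlockSubspace)
    (hX : Antitone X) : ∃ Y ≤ X 0, ∀ n, ctx.AlmostSubset (Y : Set 𝒲) (X n) := by
  obtain ⟨y, hy, hyX⟩ := exists_isBlockSeq_mem X
  refine ⟨⟨_, y, hy, hy.1, rfl⟩, ?_, fun n => ?_⟩
  · exact fspan_subset (X 0).fspan_coe (Set.range_subset_iff.2 fun n => hX n.zero_le (hyX n))
  · exact hy.fspan_almostSubset (X n).fspan_coe fun k hk => hX hk (hyX k)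

theorem BlockSubspace.exists_le_forall_mem_decides {ι : Type*} {S : Set ι} (hS : S.Countable)
    {Q : ι → ctx.BlockSubspace → Prop}
    (hQ : ∀ i ⦃Y X : ctx.BlockSubspace⦄, ctx.AlmostSubset Y X → Q i X → Q i Y)
    (X : ctx.BlockSubspace) : ∃ Y ≤ X, ∀ i ∈ S, Decides Y (Q i) := by
  have : Countable S := hS.to_subtype
  obtain ⟨Y, hYX, hY⟩ := exists_le_forall_decides (ι := S)
    (r := fun Y X : ctx.BlockSubspace => ctx.AlmostSubset Y X) (fun _ _ => .of_subset)
    exists_le_le_of_almostSubset exists_le_forall_almostSubset (fun i => hQ i) X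
  exact ⟨Y, hYX, fun i hi => hY ⟨i, hi⟩⟩

end BlockSubspace

section Position

/-- The state of an adversarial game: the spans of the subspaces played by I and by II, the vectors
played, and the last ordinal played (before the first move, the ordinal of the game). -/
structure Position (𝒲 : Type) : Type (u + 1) where
  spanI : Set 𝒲
  spanII : Set 𝒲
  vec : List 𝒲
  bound : Ordinal.{u}

/-- The position at the start of the adversarial games of length `α`. -/
def startPosition (α : Ordinal.{u}) : Position 𝒲 := ⟨ctx.fspan ∅, ctx.fspan ∅, [], α⟩

/-- The position after I plays the subspace `E`, the vector `x` and the ordinal `ξ`. -/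
def playI (p : Position.{u} 𝒲) (E : Set 𝒲) (x : 𝒲) (ξ : Ordinal.{u}) : Position 𝒲 :=
  ⟨ctx.fspan (p.spanI ∪ E), p.spanII, p.vec ++ [x], ξ⟩

/-- The position after II plays the subspace `F` and the vector `y`. -/
def playII (p : Position.{u} 𝒲) (F : Set 𝒲) (y : 𝒲) : Position 𝒲 :=
  ⟨p.spanI, ctx.fspan (p.spanII ∪ F), p.vec ++ [y], p.bound⟩

/-- A player whose previous subspaces span `G` may play the finite-dimensional `E ⊆ X` together with
the vector `x`. -/
def IsMove (X G E : Set 𝒲) (x : 𝒲) : Prop :=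
  ctx.IsFinDimIn E X ∧ x ≠ 0 ∧ x ∈ ctx.fspan (G ∪ E)

/-- The positions, over `W`, of games of length at most `α`. The parity of the number of vectors
played is arbitrary, so that positions in the middle of a round are included. -/
def positions (α : Ordinal.{u}) : Set (Position.{u} 𝒲) :=
  {p | ctx.IsFinDimIn p.spanI ctx.W ∧ ctx.IsFinDimIn p.spanII ctx.W ∧
    (∀ v ∈ p.vec, v ∈ ctx.W) ∧ p.bound ≤ α}

variable {ctx} {X Y G E F : Set 𝒲} {x y : 𝒲} {α ξ : Ordinal.{u}} {p : Position.{u} 𝒲}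

theorem IsMove.mono (h : ctx.IsMove Y G E x) (hYX : Y ⊆ X) : ctx.IsMove X G E x :=
  ⟨h.1.mono hYX, h.2⟩

theorem IsMove.of_natLt {m : ℕ} (h : ctx.IsMove Y G E x) (hm : Y ∩ ctx.tail m ⊆ X)
    (hY : ctx.fspan Y = Y) (hE : ctx.NatLt m E) : ctx.IsMove X G E x :=
  ⟨h.1.of_subset ((Set.subset_inter (h.1.subset hY) (natLt_iff_subset_tail.1 hE)).trans hm), h.2⟩

theorem IsMove.isFinDimIn_fspan_union (h : ctx.IsMove X G E x) (hG : ctx.IsFinDimIn G X) :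
    ctx.IsFinDimIn (ctx.fspan (G ∪ E)) X :=
  hG.fspan_union h.1

theorem IsMove.mem (h : ctx.IsMove X G E x) (hG : ctx.IsFinDimIn G X) (hX : ctx.fspan X = X) :
    x ∈ X :=
  (h.isFinDimIn_fspan_union hG).subset hX h.2.2

theorem playII_playI : ctx.playII (ctx.playI p E x ξ) F y =
    ⟨ctx.fspan (p.spanI ∪ E), ctx.fspan (p.spanII ∪ F), p.vec ++ [x, y], ξ⟩ := by
  rw [playII, playI, List.append_assoc, List.singleton_append]

theorem startPosition_mem_positions : ctx.startPosition α ∈ ctx.positions α :=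
  ⟨isFinDimIn_fspan_empty, isFinDimIn_fspan_empty, List.forall_mem_nil _, le_rfl⟩

theorem playI_mem_positions (hp : p ∈ ctx.positions α) (hx : ctx.IsMove ctx.W p.spanI E x)
    (hξ : ξ ≤ p.bound) : ctx.playI p E x ξ ∈ ctx.positions α := by
  obtain ⟨hI, hII, hvec, hbound⟩ := hp
  exact ⟨hx.isFinDimIn_fspan_union hI, hII,
    List.forall_mem_append.2 ⟨hvec, List.forall_mem_singleton.2 (hx.mem hI ctx.fspan_W)⟩,
    hξ.trans hbound⟩

theorem playII_mem_positions (hp : p ∈ ctx.positions α) (hy : ctx.IsMove ctx.W p.spanII F y) :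
    ctx.playII p F y ∈ ctx.positions α := by
  obtain ⟨hI, hII, hvec, hbound⟩ := hp
  exact ⟨hI, hy.isFinDimIn_fspan_union hII,
    List.forall_mem_append.2 ⟨hvec, List.forall_mem_singleton.2 (hy.mem hII ctx.fspan_W)⟩, hbound⟩

theorem countable_positions (hα : α < (Cardinal.aleph 1).ord) : (ctx.positions α).Countable := by
  have hfin := countable_setOf_isFinDimIn (ctx := ctx) ctx.countable_W
  have hlist : {l : List 𝒲 | ∀ v ∈ l, v ∈ ctx.W}.Countable := by
    have : Countable ctx.W := ctx.countable_W.to_subtype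
    rw [← Subtype.range_coe (s := ctx.W), ← Set.range_list_map]
    exact Set.countable_range _
  have hprod := hfin.prod (hfin.prod (hlist.prod (countable_Iic_of_lt_ord_aleph_one hα)))
  refine (hprod.image fun q => ⟨q.1, q.2.1, q.2.2.1, q.2.2.2⟩).mono fun p hp => ?_
  exact ⟨(p.spanI, p.spanII, p.vec, p.bound), hp, rfl⟩

end Position

section Games

/-- II has a strategy in the game `A` in `X` to play in `T`, continuing from the position `p`. -/
def IIWinsAFrom (X : Set 𝒲) (T : Set (List 𝒲)) (p : Position.{u} 𝒲) : Prop :=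
  (p.bound = 0 → p.vec ∈ T) ∧ (p.bound ≠ 0 → ctx.IIWinsA X T p.bound p.spanI p.spanII p.vec)

/-- I has a strategy in the game `B` in `X` to play in `T`, continuing from the position `p`. -/
def IWinsBFrom (X : Set 𝒲) (T : Set (List 𝒲)) (p : Position.{u} 𝒲) : Prop :=
  (p.bound = 0 → p.vec ∈ T) ∧ (p.bound ≠ 0 → ctx.IWinsB X T p.bound p.spanI p.spanII p.vec)

/-- A position is lost below `Y` if II wins the game `A` from it in no block subspace of `Y`. -/
def IsLost (Y : ctx.BlockSubspace) (T : Set (List 𝒲)) (p : Position.{u} 𝒲) : Prop :=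
  ∀ Z ≤ Y, ¬ctx.IIWinsAFrom Z T p

/-- For some `n`, all replies of II in `X` beyond `n` lead from `p` into `B`. -/
def ForcesReply (X : Set 𝒲) (B : Position.{u} 𝒲 → Prop) (p : Position.{u} 𝒲) : Prop :=
  ∃ n, ∀ F y, ctx.NatLt n F → ctx.IsMove X p.spanII F y → B (ctx.playII p F y)

variable {ctx} {X Y V : ctx.BlockSubspace} {T : Set (List 𝒲)} {α : Ordinal.{u}}
  {p : Position.{u} 𝒲}

theorem iiWinsAFrom_iff (hp : p.bound ≠ 0) : ctx.IIWinsAFrom X T p ↔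
    ∃ n, ∀ E x, ctx.NatLt n E → ctx.IsMove X p.spanI E x → ∀ Z ≤ X, ∀ ξ < p.bound,
      ∃ F y, ctx.IsMove Z p.spanII F y ∧
        ctx.IIWinsAFrom X T (ctx.playII (ctx.playI p E x ξ) F y) := by
  simp only [playII_playI]
  rw [IIWinsAFrom, and_iff_right (absurd · hp), imp_iff_right hp, IIWinsA, WellFounded.fix_eq]
  refine exists_congr fun n => ⟨fun h E x hnE ⟨hE, hx0, hx⟩ Z hZ ξ hξ => ?_,
    fun h E hE hnE x hx0 hx Z' hZ' ξ hξ => ?_⟩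
  · obtain ⟨F, hF, y, hy0, hy, hwin⟩ :=
      h E hE hnE x hx0 hx Z (isBlockSubspaceOf_coe_iff.2 ⟨Z, hZ, rfl⟩) ξ hξ
    exact ⟨F, y, ⟨hF, hy0, hy⟩, hwin⟩
  · obtain ⟨Z, hZ, rfl⟩ := isBlockSubspaceOf_coe_iff.1 hZ'
    obtain ⟨F, y, ⟨hF, hy0, hy⟩, hwin⟩ := h E x hnE ⟨hE, hx0, hx⟩ Z hZ ξ hξ
    exact ⟨F, hF, y, hy0, hy, hwin⟩

theorem iWinsBFrom_iff (hp : p.bound ≠ 0) : ctx.IWinsBFrom X T p ↔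
    ∀ Z ≤ X, ∃ E x, ctx.IsMove Z p.spanI E x ∧ ∃ ξ < p.bound,
      ctx.ForcesReply X (ctx.IWinsBFrom X T) (ctx.playI p E x ξ) := by
  simp only [ForcesReply, playII_playI]
  rw [IWinsBFrom, and_iff_right (absurd · hp), imp_iff_right hp, IWinsB, WellFounded.fix_eq]
  refine ⟨fun h Z hZ => ?_, fun h Z' hZ' => ?_⟩
  · obtain ⟨E, hE, x, hx0, hx, n, ξ, hξ, hwin⟩ := h Z (isBlockSubspaceOf_coe_iff.2 ⟨Z, hZ, rfl⟩)
    exact ⟨E, x, ⟨hE, hx0, hx⟩, ξ, hξ, n, fun F y hnF hy => hwin F hy.1 hnF y hy.2.1 hy.2.2⟩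
  · obtain ⟨Z, hZ, rfl⟩ := isBlockSubspaceOf_coe_iff.1 hZ'
    obtain ⟨E, x, ⟨hE, hx0, hx⟩, ξ, hξ, n, hwin⟩ := h Z hZ
    exact ⟨E, hE, x, hx0, hx, n, ξ, hξ, fun F hF hnF y hy0 hy => hwin F y hnF ⟨hF, hy0, hy⟩⟩

theorem IIWinsAFrom.of_almostSubset (hYX : ctx.AlmostSubset Y X) (h : ctx.IIWinsAFrom X T p) :
    ctx.IIWinsAFrom Y T p := by
  induction hβ : p.bound using WellFoundedLT.induction generalizing p with
  | ind β ih =>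
  subst hβ
  by_cases hp : p.bound = 0
  · exact ⟨h.1, fun h0 => absurd hp h0⟩
  have ⟨m, hm⟩ := hYX
  rw [iiWinsAFrom_iff hp] at h ⊢
  obtain ⟨n, hn⟩ := h
  refine ⟨max n m, fun E x hE hx Z hZY ξ hξ => ?_⟩
  obtain ⟨Z', hZ'Z, hZ'X⟩ := BlockSubspace.exists_le_le_of_almostSubset hYX hZY
  obtain ⟨F, y, hy, hwin⟩ := hn E x (hE.mono (le_max_left n m))
    (hx.of_natLt hm Y.fspan_coe (hE.mono (le_max_right n m))) Z' hZ'X ξ hξ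
  exact ⟨F, y, hy.mono hZ'Z, ih ξ hξ hwin rfl⟩

theorem ForcesReply.of_almostSubset {B : Position.{u} 𝒲 → Prop} (hYX : ctx.AlmostSubset Y X)
    (h : ctx.ForcesReply X B p) : ctx.ForcesReply Y B p := by
  obtain ⟨m, hm⟩ := hYX
  obtain ⟨n, hn⟩ := h
  exact ⟨max n m, fun F y hF hy => hn F y (hF.mono (le_max_left n m))
    (hy.of_natLt hm Y.fspan_coe (hF.mono (le_max_right n m)))⟩

theorem IsLost.exists_forcesReply (hY : ∀ q ∈ ctx.positions α, Decides Y (ctx.IIWinsAFrom · T q))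
    (hp : p ∈ ctx.positions α) (hp0 : p.bound ≠ 0) (hlost : ctx.IsLost Y T p)
    {Z : ctx.BlockSubspace} (hZY : Z ≤ Y) :
    ∃ E x, ctx.IsMove Z p.spanI E x ∧ ∃ ξ < p.bound, ∃ U ≤ Z,
      ctx.ForcesReply U (ctx.IsLost Y T) (ctx.playI p E x ξ) := by
  have hZ := hlost Z hZY
  rw [iiWinsAFrom_iff hp0] at hZ
  push Not at hZ
  obtain ⟨E, x, -, hx, U, hUZ, ξ, hξ, hU⟩ := hZ 0
  refine ⟨E, x, hx, ξ, hξ, U, hUZ, 0, fun F y _ hy => ?_⟩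
  have hq : ctx.playII (ctx.playI p E x ξ) F y ∈ ctx.positions α :=
    playII_mem_positions (playI_mem_positions hp (hx.mono Z.subset_W) hξ.le) (hy.mono U.subset_W)
  exact (hY _ hq).resolve_left fun hwin =>
    hU F y hy (hwin.of_almostSubset (.of_subset hZY))

theorem IsLost.iWinsBFrom (hVY : V ≤ Y)
    (hY : ∀ q ∈ ctx.positions α, Decides Y (ctx.IIWinsAFrom · T q))
    (hV : ∀ q ∈ ctx.positions α, Decides V (ctx.ForcesReply · (ctx.IsLost Y T) q))
    (hp : p ∈ ctx.positions α) (hlost : ctx.IsLost Y T p) : ctx.IWinsBFrom V Tᶜ p := by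
  induction hβ : p.bound using WellFoundedLT.induction generalizing p with
  | ind β ih =>
  subst hβ
  by_cases hp0 : p.bound = 0
  · exact ⟨fun _ hT => hlost Y le_rfl ⟨fun _ => hT, absurd hp0⟩, absurd hp0⟩
  rw [iWinsBFrom_iff hp0]
  intro Z hZV
  obtain ⟨E, x, hx, ξ, hξ, U, hUZ, hU⟩ := hlost.exists_forcesReply hY hp hp0 (hZV.trans hVY)
  have hq := playI_mem_positions hp (hx.mono Z.subset_W) hξ.le
  obtain ⟨n, hn⟩ : ctx.ForcesReply V (ctx.IsLost Y T) (ctx.playI p E x ξ) :=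
    (hV _ hq).resolve_right fun hnone => hnone U (hUZ.trans hZV) hU
  exact ⟨E, x, hx, ξ, hξ, n, fun F y hF hy =>
    ih ξ hξ (playII_mem_positions hq (hy.mono V.subset_W)) (hn F y hF hy) rfl⟩

end Games

end Frame

/-- Ramsey determinacy of adversarial `α`-games.  For a countable
ordinal `α` and any set `T` of finite sequences of vectors, every block subspace
`X ⊆ W` contains a block subspace `Y` such that either II has a strategy in `A^α_Y` to
play in `T`, or I has a strategy in `B^α_Y` to play in the complement of `T`. -/
theorem adversarial_determinacy
    (𝒲 : Type) [NormedAddCommGroup 𝒲] [NormedSpace ℝ 𝒲] (ctx : Frame 𝒲)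
    (α : Ordinal) (hα : α < (Cardinal.aleph 1).ord) (T : Set (List 𝒲))
    (X : Set 𝒲) (hX : ctx.IsBlockSubspace X) :
    ∃ Y : Set 𝒲, ctx.IsBlockSubspaceOf Y X ∧
      (ctx.IIStratA Y α T ∨ ctx.IStratB Y α Tᶜ) := by
  obtain ⟨Y, hYX, hY⟩ := Frame.BlockSubspace.exists_le_forall_mem_decides
    (Frame.countable_positions hα) (Q := fun p Z => ctx.IIWinsAFrom Z T p)
    (fun _ _ _ h => .of_almostSubset h) ⟨X, hX⟩
  obtain ⟨V, hVY, hV⟩ := Frame.BlockSubspace.exists_le_forall_mem_decides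
    (Frame.countable_positions hα) (Q := fun p Z => ctx.ForcesReply Z (ctx.IsLost Y T) p)
    (fun _ _ _ h => .of_almostSubset h) Y
  have hstart : ctx.startPosition α ∈ ctx.positions α := Frame.startPosition_mem_positions
  refine ⟨V, Frame.isBlockSubspaceOf_coe_iff.2 ⟨V, hVY.trans hYX, rfl⟩, ?_⟩
  exact (hY _ hstart).imp (fun hwin => hwin.of_almostSubset (.of_subset hVY))
    (fun hlost => Frame.IsLost.iWinsBFrom hVY hY hV hstart hlost)

end Rosendal
end
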